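/- arXiv:math/0603166 — 8 statements merged into one kernel-verified Lean document; each statement's English description precedes it below -/
import Mathlib

section
/- Let (L₁,…,L_k; m; X) be a weak (k,d)-multinet on a line arrangement L. Then ∑_{p∈X} n_p² = d², where n_p = ∑_{ℓ ∈ L_i, p ∈ ℓ} m(ℓ) (independent of i). -/
/-! Double counting. Fix two different classes `L₀`, `L₁`. Expanding `d² = (∑_{ℓ ∈ L₀} m ℓ)(∑_{ℓ' ∈ L₁} m ℓ')`
gives a sum over pairs `(ℓ, ℓ')`, and expanding each `n_p²` as the product of the local sums at `p` over
`L₀` and `L₁` gives a sum over triples `(p, ℓ, ℓ')` with `p ∈ X` on both lines. The two agree because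
each pair of lines from different classes passes through exactly one point of `X`, namely `ℓ ∩ ℓ'`. -/

open Finset
open scoped Classical

/-- For a weak (k,d)-multinet, ∑_{p∈X} n_p² = d². -/
theorem weak_multinet_sum_np_sq
    (L : Finset (Submodule ℂ (Fin 3 → ℂ)))
    (hL2 : ∀ ℓ ∈ L, Module.finrank ℂ ℓ = 2)
    (k d : ℕ) (hk : 3 ≤ k)
    (Li : Fin k → Finset (Submodule ℂ (Fin 3 → ℂ)))
    (hsub : ∀ i, Li i ⊆ L)
    (hcover : ∀ ℓ ∈ L, ∃ i, ℓ ∈ Li i)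
    (hdisj : ∀ i j, i ≠ j → Disjoint (Li i) (Li j))
    (hne : ∀ i, (Li i).Nonempty)
    (m : Submodule ℂ (Fin 3 → ℂ) → ℕ)
    (hm : ∀ ℓ ∈ L, 0 < m ℓ)
    (X : Finset (Submodule ℂ (Fin 3 → ℂ)))
    (hX : ∀ p ∈ X, Module.finrank ℂ p = 1 ∧ 3 ≤ (L.filter (fun ℓ => p ≤ ℓ)).card)
    (h1 : ∀ i, ∑ ℓ ∈ Li i, m ℓ = d)
    (h2 : ∀ i j, i ≠ j → ∀ ℓ ∈ Li i, ∀ ℓ' ∈ Li j, ℓ ⊓ ℓ' ∈ X)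
    (n : Submodule ℂ (Fin 3 → ℂ) → ℕ)
    (h3 : ∀ p ∈ X, ∀ i, ∑ ℓ ∈ (Li i).filter (fun ℓ => p ≤ ℓ), m ℓ = n p)
    :
    ∑ p ∈ X, (n p) ^ 2 = d ^ 2 := by
  have h01 : (⟨0, by omega⟩ : Fin k) ≠ ⟨1, by omega⟩ := by simp
  generalize (⟨0, by omega⟩ : Fin k) = a at h01
  generalize (⟨1, by omega⟩ : Fin k) = b at h01
  have hpt : ∀ ℓ ∈ Li a, ∀ ℓ' ∈ Li b,
      X.filter (fun p => p ≤ ℓ ∧ p ≤ ℓ') = {ℓ ⊓ ℓ'} := by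
    intro ℓ hℓ ℓ' hℓ'
    have hmem := h2 a b h01 ℓ hℓ ℓ' hℓ'
    ext p
    simp only [mem_filter, mem_singleton]
    constructor
    · rintro ⟨hp, hpla, hplb⟩
      -- both `p` and `ℓ ⊓ ℓ'` lie in `X`, hence are one-dimensional
      exact Submodule.eq_of_le_of_finrank_eq (le_inf hpla hplb)
        ((hX p hp).1.trans (hX _ hmem).1.symm)
    · rintro rfl
      exact ⟨hmem, inf_le_left, inf_le_right⟩
  calc ∑ p ∈ X, (n p) ^ 2
      = ∑ p ∈ X, ∑ ℓ ∈ Li a, ∑ ℓ' ∈ Li b, if p ≤ ℓ ∧ p ≤ ℓ' then m ℓ * m ℓ' else 0 := by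
        refine sum_congr rfl fun p hp => ?_
        rw [sq]
        nth_rewrite 1 [← h3 p hp a]
        rw [← h3 p hp b, sum_filter, sum_filter, sum_mul_sum]
        refine sum_congr rfl fun ℓ _ => sum_congr rfl fun ℓ' _ => ?_
        by_cases h : p ≤ ℓ <;> by_cases h' : p ≤ ℓ' <;> simp [h, h']
    _ = ∑ ℓ ∈ Li a, ∑ ℓ' ∈ Li b, ∑ p ∈ X, if p ≤ ℓ ∧ p ≤ ℓ' then m ℓ * m ℓ' else 0 := by
        rw [sum_comm]
        exact sum_congr rfl fun ℓ _ => sum_comm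
    _ = ∑ ℓ ∈ Li a, ∑ ℓ' ∈ Li b, m ℓ * m ℓ' := by
        refine sum_congr rfl fun ℓ hℓ => sum_congr rfl fun ℓ' hℓ' => ?_
        rw [← sum_filter, hpt ℓ hℓ ℓ' hℓ', sum_singleton]
    _ = d ^ 2 := by rw [← sum_mul_sum, h1, h1, sq]
end

section
/- Let (L₁,…,L_k; m; X) be a weak (k,d)-multinet on a line arrangement L. Then for every line ℓ ∈ L, ∑_{p ∈ X, p ∈ ℓ} n_p = d, where n_p = ∑_{ℓ' ∈ L_i, p ∈ ℓ'} m(ℓ') (independent of i). -/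
/-!
Let `ℓ` belong to the class `L_i` and fix another class `L_j`. Each `ℓ' ∈ L_j` meets `ℓ` in exactly
one point, and this point is in `X`. Expanding each `n_p` over the class `L_j` and exchanging the
two summations therefore counts every `ℓ' ∈ L_j` exactly once with weight `m ℓ'`, giving `d`.
-/

open Finset
open scoped Classical

/-- For a weak (k,d)-multinet and every line ℓ ∈ L,
∑_{p ∈ X, p ∈ ℓ} n_p = d. -/
theorem weak_multinet_sum_np_on_line
    (L : Finset (Submodule ℂ (Fin 3 → ℂ)))
    (hL2 : ∀ ℓ ∈ L, Module.finrank ℂ ℓ = 2)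
    (k d : ℕ) (hk : 3 ≤ k)
    (Li : Fin k → Finset (Submodule ℂ (Fin 3 → ℂ)))
    (hsub : ∀ i, Li i ⊆ L)
    (hcover : ∀ ℓ ∈ L, ∃ i, ℓ ∈ Li i)
    (hdisj : ∀ i j, i ≠ j → Disjoint (Li i) (Li j))
    (hne : ∀ i, (Li i).Nonempty)
    (m : Submodule ℂ (Fin 3 → ℂ) → ℕ)
    (hm : ∀ ℓ ∈ L, 0 < m ℓ)
    (X : Finset (Submodule ℂ (Fin 3 → ℂ)))
    (hX : ∀ p ∈ X, Module.finrank ℂ p = 1 ∧ 3 ≤ (L.filter (fun ℓ => p ≤ ℓ)).card)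
    (h1 : ∀ i, ∑ ℓ ∈ Li i, m ℓ = d)
    (h2 : ∀ i j, i ≠ j → ∀ ℓ ∈ Li i, ∀ ℓ' ∈ Li j, ℓ ⊓ ℓ' ∈ X)
    (n : Submodule ℂ (Fin 3 → ℂ) → ℕ)
    (h3 : ∀ p ∈ X, ∀ i, ∑ ℓ ∈ (Li i).filter (fun ℓ => p ≤ ℓ), m ℓ = n p)
    :
    ∀ ℓ ∈ L, ∑ p ∈ X.filter (fun p => p ≤ ℓ), n p = d := by
  intro ℓ hℓ
  obtain ⟨i, hi⟩ := hcover ℓ hℓ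
  have : Nontrivial (Fin k) := Fin.nontrivial_iff_two_le.mpr (by omega)
  obtain ⟨j, hji⟩ := exists_ne i
  -- A point of `X` on both `ℓ` and `ℓ'` equals `ℓ ⊓ ℓ'`, since both have dimension one.
  have key : ∀ ℓ' ∈ Li j, ∀ p ∈ X, p ≤ ℓ → p ≤ ℓ' → p = ℓ ⊓ ℓ' := by
    intro ℓ' hℓ' p hp hpl hpl'
    refine Submodule.eq_of_le_of_finrank_eq (le_inf hpl hpl') ?_
    rw [(hX p hp).1, (hX _ (h2 i j hji.symm ℓ hi ℓ' hℓ')).1]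
  calc ∑ p ∈ X.filter (fun p => p ≤ ℓ), n p
      = ∑ p ∈ X.filter (fun p => p ≤ ℓ), ∑ ℓ' ∈ (Li j).filter (fun ℓ' => p ≤ ℓ'), m ℓ' :=
        Finset.sum_congr rfl fun p hp => (h3 p (Finset.mem_filter.mp hp).1 j).symm
    _ = ∑ ℓ' ∈ Li j, ∑ _p ∈ ({ℓ ⊓ ℓ'} : Finset (Submodule ℂ (Fin 3 → ℂ))), m ℓ' := by
        refine Finset.sum_comm' fun p ℓ' => ?_
        simp only [Finset.mem_filter, Finset.mem_singleton]
        constructor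
        · rintro ⟨⟨hp, hpl⟩, hℓ', hpl'⟩
          exact ⟨key ℓ' hℓ' p hp hpl hpl', hℓ'⟩
        · rintro ⟨rfl, hℓ'⟩
          exact ⟨⟨h2 i j hji.symm ℓ hi ℓ' hℓ', inf_le_left⟩, hℓ', inf_le_right⟩
    _ = d := by simpa using h1 j
end

section
/- (Theorem: multinets give isotropic subspaces of the Orlik–Solomon algebra.) Let L = {ℓ₁,…,ℓ_n} be a line arrangement with ℓ_j = ker α_j for pairwise non-proportional nonzero linear forms α_j on ℂ³. Suppose L supports a weak (k,d)-multinet (L₁,…,L_k; m; X). For each i, set a_i = ∑_{ℓ_j ∈ L_i} m(ℓ_j)·e_j − ∑_{ℓ_j ∈ L₁} m(ℓ_j)·e_j, a degree-1 element of the Orlik–Solomon algebra A. Then the images of a₂,…,a_k in A are linearly independent (so they span a (k−1)-dimensional subspace of A¹), and a_i · a_j = 0 in A for all 2 ≤ i, j ≤ k; that is, A¹ contains a (k−1)-dimensional isotropic subspace. -/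
/-!
Write `f i` for the vector of multiplicities of the class `L_i`, extended by zero, so that
`a i` is the class of `ι (f i - f 0)`.

*Linear independence.* Since the forms are nonzero and pairwise non-proportional, every circuit has
at least three elements (`linearIndependent_of_card_le_two`). Hence all defining relations have
degree at least two and die in the trivial square-zero extension `ℚ ⊕ ℚⁿ`, which gives a
linear retraction of the Orlik–Solomon algebra onto its degree-one part `ℚⁿ` (`osDegreeOne`).
There the vectors `f i - f 0` are independent because the classes are disjoint.

*Isotropy.* Three distinct lines through a point form a circuit, so the relation
`(e_b - e_a) (e_c - e_a) = 0` holds for all lines `a, b, c` through a given point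
(`os_pencil_relation`); hence two combinations of lines through that point, each with coefficient
sum zero, multiply to zero (`pencil_mul_eq_zero`). Any two lines of different classes meet in
exactly one point of `X`, so the product of two distinct class vectors is the sum over `p ∈ X` of
the products of their restrictions to the lines through `p` (`os_mul_eq_sum_points`). Consequently
`(f i - f 0) (f i' - f 0)` splits as the sum over `p ∈ X` of its local analogues, and each of these
vanishes because all classes have the same total multiplicity `n_p` at `p`.
-/


open Finset
open scoped Classical

/-- The generator e_j of the exterior algebra over ℚ on n generators. -/
noncomputable def osGen (nn : ℕ) (j : Fin nn) : ExteriorAlgebra ℚ (Fin nn → ℚ) :=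
  ExteriorAlgebra.ι ℚ (Pi.single j 1)

/-- The element ∂(e_{i₁}∧⋯∧e_{i_p}) = ∑_j (−1)^{j−1} e_{i₁}⋯ê_{i_j}⋯e_{i_p}
associated with a list of indices. -/
noncomputable def osBoundary (nn : ℕ) (l : List (Fin nn)) :
    ExteriorAlgebra ℚ (Fin nn → ℚ) :=
  ∑ j ∈ Finset.range l.length,
    ((-1 : ℚ) ^ j) • ((l.eraseIdx j).map (osGen nn)).prod

/-- A finite set S of indices is minimally dependent (a circuit) for the family of
linear forms α if the forms indexed by S are linearly dependent but every proper
subset is linearly independent. -/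
def minimallyDependent (nn : ℕ) (α : Fin nn → ((Fin 3 → ℂ) →ₗ[ℂ] ℂ))
    (S : Finset (Fin nn)) : Prop :=
  (¬ LinearIndependent ℂ (fun j : {x // x ∈ S} => α j.1)) ∧
    ∀ T : Finset (Fin nn), T ⊂ S → LinearIndependent ℂ (fun j : {x // x ∈ T} => α j.1)

/-- The relation on the exterior algebra identifying the Orlik–Solomon generators
∂(e_{i₁}∧⋯∧e_{i_p}) (for circuits {i₁,…,i_p}) with 0; the Orlik–Solomon algebra is
the quotient RingQuot (osRel nn α), i.e. the quotient of the exterior algebra by the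
two-sided ideal generated by these elements. -/
def osRel (nn : ℕ) (α : Fin nn → ((Fin 3 → ℂ) →ₗ[ℂ] ℂ)) :
    ExteriorAlgebra ℚ (Fin nn → ℚ) → ExteriorAlgebra ℚ (Fin nn → ℚ) → Prop :=
  fun x y => y = 0 ∧ ∃ l : List (Fin nn), l.Nodup ∧
    minimallyDependent nn α l.toFinset ∧ x = osBoundary nn l

theorem linearIndependent_of_card_le_two {nn : ℕ} {α : Fin nn → ((Fin 3 → ℂ) →ₗ[ℂ] ℂ)}
    (hα0 : ∀ j, α j ≠ 0) (hprop : ∀ j j', j ≠ j' → ∀ t : ℂ, α j ≠ t • α j')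
    (T : Finset (Fin nn)) (hT : T.card ≤ 2) :
    LinearIndependent ℂ (fun j : {x // x ∈ T} => α j.1) := by
  change LinearIndepOn ℂ α (T : Set (Fin nn))
  have hcases : T.card = 0 ∨ T.card = 1 ∨ T.card = 2 := by omega
  rcases hcases with h | h | h
  · rw [Finset.card_eq_zero] at h
    subst h
    simp
  · obtain ⟨x, rfl⟩ := Finset.card_eq_one.1 h
    simpa using hα0 x
  · obtain ⟨x, y, hxy, rfl⟩ := Finset.card_eq_two.1 h
    rw [Finset.coe_pair, linearIndepOn_pair_iff _ hxy (hα0 x)]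
    exact fun c hc => hprop y x hxy.symm c hc.symm

/-- Three distinct lines through a common point form a circuit: their forms lie in the
two-dimensional annihilator of the point, and any two of them are independent. -/
theorem minimallyDependent_triple {nn : ℕ} {α : Fin nn → ((Fin 3 → ℂ) →ₗ[ℂ] ℂ)}
    (hα0 : ∀ j, α j ≠ 0) (hprop : ∀ j j', j ≠ j' → ∀ t : ℂ, α j ≠ t • α j')
    (p : Submodule ℂ (Fin 3 → ℂ)) (hp : Module.finrank ℂ p = 1)
    (S : Finset (Fin nn)) (hS : S.card = 3) (hSp : ∀ j ∈ S, p ≤ LinearMap.ker (α j)) :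
    minimallyDependent nn α S := by
  refine ⟨fun hli => ?_, fun T hT => ?_⟩
  · have hann := Subspace.finrank_add_finrank_dualAnnihilator_eq p
    rw [hp, Module.finrank_fin_fun] at hann
    have hmem : ∀ j : {x // x ∈ S}, α j.1 ∈ p.dualAnnihilator := by
      intro j
      rw [Submodule.mem_dualAnnihilator]
      exact fun w hw => hSp j.1 j.2 hw
    have hli' : LinearIndependent ℂ
        (fun j : {x // x ∈ S} => (⟨α j.1, hmem j⟩ : p.dualAnnihilator)) :=
      LinearIndependent.of_comp p.dualAnnihilator.subtype hli
    have hcard := hli'.fintype_card_le_finrank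
    rw [Fintype.card_coe] at hcard
    omega
  · exact linearIndependent_of_card_le_two hα0 hprop T (by
      have := Finset.card_lt_card hT
      omega)

/-- The class of the generator `e_j` in the Orlik–Solomon algebra. -/
noncomputable def osClass (nn : ℕ) (α : Fin nn → ((Fin 3 → ℂ) →ₗ[ℂ] ℂ)) (j : Fin nn) :
    RingQuot (osRel nn α) :=
  RingQuot.mkAlgHom ℚ (osRel nn α) (osGen nn j)

theorem osClass_mul_self (nn : ℕ) (α : Fin nn → ((Fin 3 → ℂ) →ₗ[ℂ] ℂ)) (j : Fin nn) :
    osClass nn α j * osClass nn α j = 0 := by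
  rw [osClass, ← map_mul, osGen, ExteriorAlgebra.ι_sq_zero, map_zero]

theorem osClass_mul_swap (nn : ℕ) (α : Fin nn → ((Fin 3 → ℂ) →ₗ[ℂ] ℂ)) (i j : Fin nn) :
    osClass nn α i * osClass nn α j = - (osClass nn α j * osClass nn α i) := by
  rw [osClass, osClass, ← map_mul, ← map_mul, ← map_neg, osGen, osGen,
    eq_neg_of_add_eq_zero_left (ExteriorAlgebra.ι_add_mul_swap _ _)]

/-- The degree-two Orlik–Solomon relation `∂(e_a e_b e_c) = (e_b - e_a) (e_c - e_a)` of a pencil;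
it holds trivially when two of the three lines coincide. -/
theorem os_pencil_relation {nn : ℕ} {α : Fin nn → ((Fin 3 → ℂ) →ₗ[ℂ] ℂ)}
    (hα0 : ∀ j, α j ≠ 0) (hprop : ∀ j j', j ≠ j' → ∀ t : ℂ, α j ≠ t • α j')
    (p : Submodule ℂ (Fin 3 → ℂ)) (hp : Module.finrank ℂ p = 1) (a b c : Fin nn)
    (ha : p ≤ LinearMap.ker (α a)) (hb : p ≤ LinearMap.ker (α b))
    (hc : p ≤ LinearMap.ker (α c)) :
    (osClass nn α b - osClass nn α a) * (osClass nn α c - osClass nn α a) = 0 := by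
  by_cases hab : a = b
  · simp [hab]
  by_cases hac : a = c
  · simp [hac]
  have hexp : (osClass nn α b - osClass nn α a) * (osClass nn α c - osClass nn α a)
      = osClass nn α b * osClass nn α c - osClass nn α a * osClass nn α c
        + osClass nn α a * osClass nn α b := by
    rw [osClass_mul_swap nn α a b, sub_mul, mul_sub, mul_sub, osClass_mul_self]
    abel
  by_cases hbc : b = c
  · subst hbc
    rw [hexp, osClass_mul_self]
    abel
  have hcirc : minimallyDependent nn α [a, b, c].toFinset := by
    refine minimallyDependent_triple hα0 hprop p hp _ ?_ ?_
    · rw [List.toFinset_card_of_nodup (by simp [hab, hac, hbc])]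
      rfl
    · intro j hj
      simp only [List.mem_toFinset, List.mem_cons, List.not_mem_nil, or_false] at hj
      rcases hj with rfl | rfl | rfl <;> assumption
  have hrel : RingQuot.mkAlgHom ℚ (osRel nn α) (osBoundary nn [a, b, c]) = 0 := by
    rw [← map_zero (RingQuot.mkAlgHom ℚ (osRel nn α))]
    exact RingQuot.mkAlgHom_rel ℚ ⟨rfl, [a, b, c], by simp [hab, hac, hbc], hcirc, rfl⟩
  rw [hexp, ← hrel]
  simp [osBoundary, osClass, Finset.sum_range_succ, sub_eq_add_neg]

theorem pencil_mul_eq_zero {A ι : Type*} [Ring A] [Algebra ℚ A] (e : ι → A) (S : Finset ι)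
    (hS : ∀ a ∈ S, ∀ b ∈ S, ∀ c ∈ S, (e b - e a) * (e c - e a) = 0) (x y : ι → ℚ)
    (hx : ∑ j ∈ S, x j = 0) (hy : ∑ j ∈ S, y j = 0) :
    (∑ j ∈ S, x j • e j) * (∑ j ∈ S, y j • e j) = 0 := by
  rcases S.eq_empty_or_nonempty with rfl | ⟨a, haS⟩
  · simp
  -- A combination with coefficient sum zero is a combination of the differences `e j - e a`.
  have hshift : ∀ z : ι → ℚ, ∑ j ∈ S, z j = 0 →
      ∑ j ∈ S, z j • e j = ∑ j ∈ S, z j • (e j - e a) := by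
    intro z hz
    simp only [smul_sub, Finset.sum_sub_distrib, ← Finset.sum_smul, hz, zero_smul, sub_zero]
  rw [hshift x hx, hshift y hy, Finset.sum_mul_sum]
  refine Finset.sum_eq_zero fun b hb => Finset.sum_eq_zero fun c hc => ?_
  rw [smul_mul_smul_comm, hS a haS b hb c hc, smul_zero]

/-- If every pair of lines in the supports of `x` and `y` lies on exactly one member of the finite
set `X` of points (incidence being the relation `r`), the product of `x` and `y` is the sum over
`X` of the products of their restrictions to the lines through each point. -/
theorem os_mul_eq_sum_points {A ι P : Type*} [Fintype ι] [Ring A] [Algebra ℚ A] (e : ι → A)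
    (X : Finset P) (r : P → ι → Prop) (x y : ι → ℚ)
    (h : ∀ j j', x j ≠ 0 → y j' ≠ 0 → ∃ q ∈ X, ∀ p ∈ X, (r p j ∧ r p j') ↔ p = q) :
    (∑ j, x j • e j) * (∑ j, y j • e j) =
      ∑ p ∈ X, (∑ j ∈ Finset.univ.filter (r p), x j • e j) *
        (∑ j ∈ Finset.univ.filter (r p), y j • e j) := by
  simp only [Finset.sum_mul_sum, Finset.sum_filter]
  rw [Finset.sum_comm (s := X)]
  refine Finset.sum_congr rfl fun j _ => ?_
  rw [Finset.sum_comm (s := X)]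
  refine Finset.sum_congr rfl fun j' _ => ?_
  by_cases hx : x j = 0
  · simp [hx]
  by_cases hy : y j' = 0
  · simp [hy]
  obtain ⟨q, hq, hiff⟩ := h j j' hx hy
  rw [Finset.sum_eq_single_of_mem q hq]
  · rw [if_pos ((hiff q hq).2 rfl).1, if_pos ((hiff q hq).2 rfl).2]
  · intro p hp hpq
    by_cases hpj : r p j
    · rw [if_neg fun hr => hpq ((hiff p hp).1 ⟨hpj, hr⟩), mul_zero]
    · rw [if_neg hpj, zero_mul]

/-- Every relation of the Orlik–Solomon algebra is a sum of products of at least two generators,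
because circuits have at least three elements. -/
theorem toTrivSqZeroExt_osRel {nn : ℕ} {α : Fin nn → ((Fin 3 → ℂ) →ₗ[ℂ] ℂ)}
    (hα0 : ∀ j, α j ≠ 0) (hprop : ∀ j j', j ≠ j' → ∀ t : ℂ, α j ≠ t • α j')
    ⦃x y : ExteriorAlgebra ℚ (Fin nn → ℚ)⦄ (hxy : osRel nn α x y) :
    ExteriorAlgebra.toTrivSqZeroExt x = ExteriorAlgebra.toTrivSqZeroExt y := by
  obtain ⟨rfl, l, hl, hcirc, rfl⟩ := hxy
  have hlen : 3 ≤ l.length := by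
    by_contra hlt
    refine hcirc.1 (linearIndependent_of_card_le_two hα0 hprop _ ?_)
    rw [List.toFinset_card_of_nodup hl]
    omega
  rw [osBoundary, map_sum, map_zero]
  refine Finset.sum_eq_zero fun j hj => ?_
  have hlen' : 2 ≤ (l.eraseIdx j).length := by
    rw [List.length_eraseIdx_of_lt (Finset.mem_range.1 hj)]
    omega
  generalize l.eraseIdx j = t at hlen'
  match t, hlen' with
  | a :: b :: s, _ =>
    rw [map_smul, List.map_cons, List.map_cons, List.prod_cons, List.prod_cons, ← mul_assoc,
      map_mul, map_mul, osGen, osGen, ExteriorAlgebra.toTrivSqZeroExt_ι,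
      ExteriorAlgebra.toTrivSqZeroExt_ι, TrivSqZeroExt.inr_mul_inr, zero_mul, smul_zero]

/-- The projection of the Orlik–Solomon algebra onto its degree-one part `ℚⁿ`. -/
noncomputable def osDegreeOne {nn : ℕ} {α : Fin nn → ((Fin 3 → ℂ) →ₗ[ℂ] ℂ)}
    (hα0 : ∀ j, α j ≠ 0) (hprop : ∀ j j', j ≠ j' → ∀ t : ℂ, α j ≠ t • α j') :
    RingQuot (osRel nn α) →ₗ[ℚ] (Fin nn → ℚ) :=
  (TrivSqZeroExt.sndHom ℚ (Fin nn → ℚ)).comp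
    (RingQuot.liftAlgHom ℚ ⟨ExteriorAlgebra.toTrivSqZeroExt,
      toTrivSqZeroExt_osRel hα0 hprop⟩).toLinearMap

theorem osDegreeOne_mk_ι {nn : ℕ} {α : Fin nn → ((Fin 3 → ℂ) →ₗ[ℂ] ℂ)}
    (hα0 : ∀ j, α j ≠ 0) (hprop : ∀ j j', j ≠ j' → ∀ t : ℂ, α j ≠ t • α j')
    (v : Fin nn → ℚ) :
    osDegreeOne hα0 hprop (RingQuot.mkAlgHom ℚ (osRel nn α) (ExteriorAlgebra.ι ℚ v)) = v := by
  simp [osDegreeOne, RingQuot.liftAlgHom_mkAlgHom_apply]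

/-- The coefficient vector of `∑_{j ∈ S} m(j) e_j`. -/
noncomputable def classVec {nn : ℕ} (m : Fin nn → ℕ) (S : Finset (Fin nn)) : Fin nn → ℚ :=
  fun j => if j ∈ S then (m j : ℚ) else 0

theorem ι_eq_sum_osGen {nn : ℕ} (v : Fin nn → ℚ) :
    ExteriorAlgebra.ι ℚ v = ∑ j, v j • osGen nn j := by
  simp only [osGen, ← map_smul, ← map_sum]
  congr 1
  exact pi_eq_sum_univ' v

theorem sum_osGen_eq_ι {nn : ℕ} (m : Fin nn → ℕ) (S : Finset (Fin nn)) :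
    ∑ j ∈ S, (m j : ℚ) • osGen nn j = ExteriorAlgebra.ι ℚ (classVec m S) := by
  simp [ι_eq_sum_osGen, classVec, ite_smul]

theorem mk_ι_eq_sum {nn : ℕ} (α : Fin nn → ((Fin 3 → ℂ) →ₗ[ℂ] ℂ)) (v : Fin nn → ℚ) :
    RingQuot.mkAlgHom ℚ (osRel nn α) (ExteriorAlgebra.ι ℚ v) = ∑ j, v j • osClass nn α j := by
  simp [ι_eq_sum_osGen, osClass, map_sum, map_smul]


/-- If a line arrangement L = {ℓ₁,…,ℓ_n} (ℓ_j = ker α_j) supports a weak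
(k,d)-multinet, then the elements a_i = ∑_{ℓ_j∈L_i} m(ℓ_j)e_j − ∑_{ℓ_j∈L₁} m(ℓ_j)e_j,
i = 2,…,k, have linearly independent images in the Orlik–Solomon algebra A and
pairwise (and self) products zero there; i.e. A¹ contains a (k−1)-dimensional
isotropic subspace. -/
theorem weak_multinet_isotropic_subspace
    (nn k d : ℕ) (hk : 3 ≤ k)
    (ℓ : Fin nn → Submodule ℂ (Fin 3 → ℂ))
    (α : Fin nn → ((Fin 3 → ℂ) →ₗ[ℂ] ℂ))
    (hα0 : ∀ j, α j ≠ 0)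
    (hker : ∀ j, ℓ j = LinearMap.ker (α j))
    (hprop : ∀ j j', j ≠ j' → ∀ t : ℂ, α j ≠ t • α j')
    (Li : Fin k → Finset (Fin nn))
    (hcover : ∀ j, ∃ i, j ∈ Li i)
    (hdisj : ∀ i i', i ≠ i' → Disjoint (Li i) (Li i'))
    (hne : ∀ i, (Li i).Nonempty)
    (m : Fin nn → ℕ) (hm : ∀ j, 0 < m j)
    (X : Finset (Submodule ℂ (Fin 3 → ℂ)))
    (hX : ∀ p ∈ X, Module.finrank ℂ p = 1 ∧
        3 ≤ (Finset.univ.filter (fun j => p ≤ ℓ j)).card)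
    (h1 : ∀ i, ∑ j ∈ Li i, m j = d)
    (h2 : ∀ i i', i ≠ i' → ∀ j ∈ Li i, ∀ j' ∈ Li i', ℓ j ⊓ ℓ j' ∈ X)
    (n : Submodule ℂ (Fin 3 → ℂ) → ℕ)
    (h3 : ∀ p ∈ X, ∀ i, ∑ j ∈ (Li i).filter (fun j => p ≤ ℓ j), m j = n p)
    (a : Fin k → RingQuot (osRel nn α))
    (ha : ∀ i, a i = (RingQuot.mkAlgHom ℚ (osRel nn α))
        (∑ j ∈ Li i, (m j : ℚ) • osGen nn j
          - ∑ j ∈ Li ⟨0, by omega⟩, (m j : ℚ) • osGen nn j)) :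
    LinearIndependent ℚ (fun i : {i : Fin k // i ≠ ⟨0, by omega⟩} => a i.1)
    ∧ ∀ i i' : Fin k, i ≠ ⟨0, by omega⟩ → i' ≠ ⟨0, by omega⟩ → a i * a i' = 0 := by
  have hk0 : 0 < k := by omega
  set o : Fin k := ⟨0, hk0⟩ with ho
  have hai : ∀ i, a i = RingQuot.mkAlgHom ℚ (osRel nn α)
      (ExteriorAlgebra.ι ℚ (classVec m (Li i) - classVec m (Li o))) := by
    intro i
    rw [ha i, sum_osGen_eq_ι, sum_osGen_eq_ι, map_sub (ExteriorAlgebra.ι ℚ)]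
  have hnot : ∀ {i i' : Fin k} {j : Fin nn}, i ≠ i' → j ∈ Li i → j ∉ Li i' :=
    fun hii hj => Finset.disjoint_left.1 (hdisj _ _ hii) hj
  constructor
  · refine LinearIndependent.of_comp (osDegreeOne hα0 hprop) ?_
    rw [Fintype.linearIndependent_iff]
    rintro g hg ⟨i, hi⟩
    obtain ⟨j, hj⟩ := hne i
    -- In the coordinate of a line of class `i`, only the vector indexed by `i` is nonzero.
    have hcoord := congrFun hg j
    simp only [Function.comp_apply, hai, osDegreeOne_mk_ι, Finset.sum_apply, Pi.smul_apply,
      Pi.sub_apply, Pi.zero_apply, smul_eq_mul] at hcoord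
    rw [Finset.sum_eq_single_of_mem ⟨i, hi⟩ (Finset.mem_univ _)] at hcoord
    · have hmj : (m j : ℚ) ≠ 0 := by exact_mod_cast (hm j).ne'
      simpa [classVec, hj, hnot hi hj, hmj] using hcoord
    · rintro ⟨i', hi'⟩ - hne'
      have hii' : i ≠ i' := fun h => hne' (Subtype.ext h.symm)
      simp [classVec, hnot hii' hj, hnot hi hj]
  · intro i i' hi hi'
    by_cases hii' : i = i'
    · subst hii'
      rw [hai, ← map_mul, ExteriorAlgebra.ι_sq_zero, map_zero]
    -- Lines of different classes meet in exactly one point of `X`.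
    have hmeet : ∀ s t : Fin k, s ≠ t → ∀ j j', classVec m (Li s) j ≠ 0 →
        classVec m (Li t) j' ≠ 0 →
        ∃ q ∈ X, ∀ p ∈ X, (p ≤ ℓ j ∧ p ≤ ℓ j') ↔ p = q := by
      intro s t hst j j' hj hj'
      have hjs : j ∈ Li s := by
        by_contra h
        exact hj (if_neg h)
      have hjt : j' ∈ Li t := by
        by_contra h
        exact hj' (if_neg h)
      have hq := h2 s t hst j hjs j' hjt
      refine ⟨ℓ j ⊓ ℓ j', hq, fun p hp => ⟨fun h => ?_, ?_⟩⟩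
      · exact Submodule.eq_of_le_of_finrank_eq (le_inf h.1 h.2)
          ((hX p hp).1.trans (hX _ hq).1.symm)
      · rintro rfl
        exact ⟨inf_le_left, inf_le_right⟩
    -- `u s` is the class sum of `L_s`, and `w p s` its restriction to the lines through `p`.
    let u : Fin k → RingQuot (osRel nn α) := fun s => ∑ j, classVec m (Li s) j • osClass nn α j
    let w : Submodule ℂ (Fin 3 → ℂ) → Fin k → RingQuot (osRel nn α) := fun p s =>
      ∑ j ∈ Finset.univ.filter (fun j => p ≤ ℓ j), classVec m (Li s) j • osClass nn α j
    have hsplit : ∀ s t : Fin k, s ≠ t → u s * u t = ∑ p ∈ X, w p s * w p t := fun s t hst =>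
      os_mul_eq_sum_points (osClass nn α) X (fun p j => p ≤ ℓ j) _ _ (hmeet s t hst)
    have hau : ∀ s, a s = u s - u o := by
      intro s
      rw [hai, map_sub (ExteriorAlgebra.ι ℚ), map_sub, mk_ι_eq_sum, mk_ι_eq_sum]
    have huo : u o * u o = 0 := by
      simp only [u, ← mk_ι_eq_sum]
      rw [← map_mul, ExteriorAlgebra.ι_sq_zero, map_zero]
    have hwo : ∀ p, w p o * w p o = 0 := by
      intro p
      have hw : w p o = RingQuot.mkAlgHom ℚ (osRel nn α) (ExteriorAlgebra.ι ℚ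
          (fun j => if p ≤ ℓ j then classVec m (Li o) j else 0)) := by
        rw [mk_ι_eq_sum]
        simp only [w, Finset.sum_filter, ite_smul, zero_smul]
      rw [hw, ← map_mul, ExteriorAlgebra.ι_sq_zero, map_zero]
    have hsum : ∀ p ∈ X, ∀ s,
        ∑ j ∈ Finset.univ.filter (fun j => p ≤ ℓ j), classVec m (Li s) j = (n p : ℚ) := by
      intro p hp s
      rw [← h3 p hp s, Nat.cast_sum, Finset.sum_filter, Finset.sum_filter]
      rw [← Finset.sum_subset (Finset.subset_univ (Li s)) fun j _ hj => by simp [classVec, hj]]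
      exact Finset.sum_congr rfl fun j hj => by simp [classVec, hj]
    have hlocal : ∀ p ∈ X, (w p i - w p o) * (w p i' - w p o) = 0 := by
      intro p hp
      have hdiff : ∀ s, w p s - w p o = ∑ j ∈ Finset.univ.filter (fun j => p ≤ ℓ j),
          (classVec m (Li s) j - classVec m (Li o) j) • osClass nn α j := by
        intro s
        simp only [w, sub_smul, Finset.sum_sub_distrib]
      rw [hdiff, hdiff]
      refine pencil_mul_eq_zero _ _ ?_ _ _ ?_ ?_
      · intro b hb c hc e he
        simp only [Finset.mem_filter, Finset.mem_univ, true_and, hker] at hb hc he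
        exact os_pencil_relation hα0 hprop p (hX p hp).1 b c e hb hc he
      · rw [Finset.sum_sub_distrib, hsum p hp, hsum p hp, sub_self]
      · rw [Finset.sum_sub_distrib, hsum p hp, hsum p hp, sub_self]
    calc a i * a i' = u i * u i' - u i * u o - u o * u i' := by
          rw [hau, hau, sub_mul, mul_sub, mul_sub, huo]
          abel
      _ = ∑ p ∈ X, (w p i - w p o) * (w p i' - w p o) := by
          rw [hsplit i i' hii', hsplit i o hi, hsplit o i' (Ne.symm hi'),
            ← Finset.sum_sub_distrib, ← Finset.sum_sub_distrib]
          refine Finset.sum_congr rfl fun p _ => ?_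
          rw [sub_mul, mul_sub, mul_sub, hwo]
          abel
      _ = 0 := Finset.sum_eq_zero hlocal
end

section
/- Let (L₁,…,L_k; m; X) be a weak (k,d)-multinet on a line arrangement L. Let J be the |X| × |L| incidence matrix over ℚ, with (p,ℓ)-entry 1 if p ∈ ℓ and 0 otherwise, and let E be the |L| × |L| matrix all of whose entries are 1. Then for each i the vector w_i ∈ ℚ^L with (w_i)_ℓ = m(ℓ) for ℓ ∈ L_i and (w_i)_ℓ = 0 otherwise satisfies (JᵀJ − E)·w_i = 0. -/
/-!
The `ℓ`-entry of `Jᵀ J w_i` is the sum of `n_p` over the base points `p` on `ℓ`: this is `h3`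
applied to the class `L_i`. Since `n_p` does not depend on the class, it may be computed instead
with a class `L_j` not containing `ℓ`. Every line of `L_j` meets `ℓ` in exactly one base point,
so double counting gives `∑_{ℓ' ∈ L_j} m(ℓ') = d` (`sum_base_points_eq`). The `ℓ`-entry of `E w_i`
is `∑_{ℓ' ∈ L_i} m(ℓ') = d` as well.
-/

open Finset
open scoped Classical

/-- Double counting against one class `C`: if `n p` is the weight of the lines of `C` through `p`
and every line of `C` meets `ℓ` in a point of `X`, then the total of `n` over the points of `X`
on `ℓ` is the total weight of `C`. -/
lemma sum_base_points_eq {V : Type*} [AddCommGroup V] [Module ℂ V]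
    (X C : Finset (Submodule ℂ V)) (m n : Submodule ℂ V → ℕ) (ℓ : Submodule ℂ V)
    (hX : ∀ p ∈ X, Module.finrank ℂ p = 1)
    (hC : ∀ ℓ' ∈ C, ℓ ⊓ ℓ' ∈ X)
    (hn : ∀ p ∈ X, ∑ ℓ' ∈ C.filter (fun ℓ' => p ≤ ℓ'), m ℓ' = n p) :
    ∑ p ∈ X.filter (fun p => p ≤ ℓ), n p = ∑ ℓ' ∈ C, m ℓ' := by
  have hswap : ∑ p ∈ X.filter (fun p => p ≤ ℓ), n p
      = ∑ ℓ' ∈ C, ∑ p ∈ X.filter (fun p => p ≤ ℓ), if p ≤ ℓ' then m ℓ' else 0 := by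
    rw [Finset.sum_comm]
    refine Finset.sum_congr rfl fun p hp => ?_
    rw [← hn p (Finset.mem_filter.1 hp).1, Finset.sum_filter]
  rw [hswap]
  refine Finset.sum_congr rfl fun ℓ' hℓ' => ?_
  have hq := hC ℓ' hℓ'
  rw [Finset.sum_eq_single (ℓ ⊓ ℓ')]
  · rw [if_pos inf_le_right]
  · intro p hp hne
    rw [Finset.mem_filter] at hp
    refine if_neg fun hle => hne ?_
    -- `p` is contained in `ℓ ⊓ ℓ'` and both are one-dimensional.
    have : FiniteDimensional ℂ (ℓ ⊓ ℓ' : Submodule ℂ V) :=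
      FiniteDimensional.of_finrank_pos (one_pos.trans_eq (hX (ℓ ⊓ ℓ') hq).symm)
    have hdim : Module.finrank ℂ p = Module.finrank ℂ (ℓ ⊓ ℓ' : Submodule ℂ V) :=
      (hX p hp.1).trans (hX (ℓ ⊓ ℓ') hq).symm
    exact Submodule.eq_of_le_of_finrank_eq (S₁ := p) (S₂ := ℓ ⊓ ℓ') (le_inf hp.2 hle) hdim
  · intro h
    rw [Finset.mem_filter] at h
    exact (h ⟨hq, inf_le_left⟩).elim

/-- For a weak (k,d)-multinet, with J the |X|×|L| incidence matrix over ℚ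
and E the all-ones |L|×|L| matrix, each vector w_i (equal to m on L_i, 0 elsewhere)
satisfies (JᵀJ − E)·w_i = 0. -/
theorem weak_multinet_cartan_kernel
    (L : Finset (Submodule ℂ (Fin 3 → ℂ)))
    (hL2 : ∀ ℓ ∈ L, Module.finrank ℂ ℓ = 2)
    (k d : ℕ) (hk : 3 ≤ k)
    (Li : Fin k → Finset (Submodule ℂ (Fin 3 → ℂ)))
    (hsub : ∀ i, Li i ⊆ L)
    (hcover : ∀ ℓ ∈ L, ∃ i, ℓ ∈ Li i)
    (hdisj : ∀ i j, i ≠ j → Disjoint (Li i) (Li j))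
    (hne : ∀ i, (Li i).Nonempty)
    (m : Submodule ℂ (Fin 3 → ℂ) → ℕ)
    (hm : ∀ ℓ ∈ L, 0 < m ℓ)
    (X : Finset (Submodule ℂ (Fin 3 → ℂ)))
    (hX : ∀ p ∈ X, Module.finrank ℂ p = 1 ∧ 3 ≤ (L.filter (fun ℓ => p ≤ ℓ)).card)
    (h1 : ∀ i, ∑ ℓ ∈ Li i, m ℓ = d)
    (h2 : ∀ i j, i ≠ j → ∀ ℓ ∈ Li i, ∀ ℓ' ∈ Li j, ℓ ⊓ ℓ' ∈ X)
    (n : Submodule ℂ (Fin 3 → ℂ) → ℕ)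
    (h3 : ∀ p ∈ X, ∀ i, ∑ ℓ ∈ (Li i).filter (fun ℓ => p ≤ ℓ), m ℓ = n p)
    (J : Matrix {p // p ∈ X} {ℓ // ℓ ∈ L} ℚ)
    (hJ : ∀ p ℓ, J p ℓ = if (p : Submodule ℂ (Fin 3 → ℂ)) ≤ (ℓ : Submodule ℂ (Fin 3 → ℂ)) then 1 else 0) :
    ∀ i : Fin k,
      Matrix.mulVec (J.transpose * J - Matrix.of (fun _ _ => (1 : ℚ)))
        (fun ℓ : {ℓ // ℓ ∈ L} =>
          if (ℓ : Submodule ℂ (Fin 3 → ℂ)) ∈ Li i then (m (ℓ : Submodule ℂ (Fin 3 → ℂ)) : ℚ) else 0)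
      = 0 := by
  intro i
  -- Sums over the subtype of `L` against `w_i` are sums over the class `Li i`.
  have hw : ∀ f : Submodule ℂ (Fin 3 → ℂ) → ℚ,
      ∑ ℓ : {ℓ // ℓ ∈ L}, f ℓ * (if (ℓ : Submodule ℂ (Fin 3 → ℂ)) ∈ Li i
        then (m (ℓ : Submodule ℂ (Fin 3 → ℂ)) : ℚ) else 0) = ∑ ℓ ∈ Li i, f ℓ * m ℓ := by
    intro f
    rw [Finset.sum_coe_sort L (fun ℓ => f ℓ * (if ℓ ∈ Li i then (m ℓ : ℚ) else 0))]
    simp only [mul_ite, mul_zero]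
    rw [← Finset.sum_filter, Finset.filter_mem_eq_inter, Finset.inter_eq_right.2 (hsub i)]
  funext ℓ
  obtain ⟨a, ha⟩ := hcover ℓ ℓ.2
  have : Nontrivial (Fin k) := Fin.nontrivial_iff_two_le.2 (by omega)
  obtain ⟨j, hj⟩ := exists_ne a
  have key := sum_base_points_eq X (Li j) m n ℓ (fun p hp => (hX p hp).1)
    (fun ℓ' hℓ' => h2 a j hj.symm ℓ ha ℓ' hℓ') (fun p hp => h3 p hp j)
  rw [h1 j] at key
  have hE : ∑ ℓ' ∈ Li i, (1 : ℚ) * m ℓ' = d := by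
    simp only [one_mul]
    exact_mod_cast h1 i
  have hJw : ∀ p : {p // p ∈ X}, J.mulVec (fun ℓ : {ℓ // ℓ ∈ L} =>
      if (ℓ : Submodule ℂ (Fin 3 → ℂ)) ∈ Li i
        then (m (ℓ : Submodule ℂ (Fin 3 → ℂ)) : ℚ) else 0) p = n p := by
    intro p
    simp only [Matrix.mulVec, dotProduct, hJ]
    rw [hw (fun ℓ' => if (p : Submodule ℂ (Fin 3 → ℂ)) ≤ ℓ' then 1 else 0), ← h3 p p.2 i,
      Finset.sum_filter]
    push_cast
    exact Finset.sum_congr rfl fun _ _ => by split_ifs <;> simp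
  rw [Matrix.sub_mulVec, ← Matrix.mulVec_mulVec, Pi.sub_apply, Pi.zero_apply, sub_eq_zero]
  trans (d : ℚ)
  · rw [funext hJw]
    simp only [Matrix.mulVec, dotProduct, Matrix.transpose_apply, hJ]
    rw [Finset.sum_coe_sort X (fun p => (if p ≤ (ℓ : Submodule ℂ (Fin 3 → ℂ)) then (1 : ℚ) else 0)
      * n p), ← key, Finset.sum_filter]
    push_cast
    exact Finset.sum_congr rfl fun _ _ => by split_ifs <;> simp
  · simp only [Matrix.mulVec, dotProduct, Matrix.of_apply]
    rw [hw (fun _ => 1), hE]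
end

section
/- Let (L₁,…,L_k; m; X) be a weak (k,d)-multinet on a line arrangement L, let ℓ₀ ∈ L_i, and set s = |{p ∈ X : p ∈ ℓ₀}| − 1. Then s · m(ℓ₀) = ∑ m(ℓ), the sum taken over all ℓ ∈ L_i with ℓ ≠ ℓ₀ and ℓ ∩ ℓ₀ ∉ X. -/
/-!
Count the base points on `ℓ₀`, weighted by `n_p`, in two ways. For any class `Li j`,
`∑_{p ∈ X, p ≤ ℓ₀} n_p = ∑_{ℓ ∈ Li j} m(ℓ) · #{p ∈ X : p ≤ ℓ₀, p ≤ ℓ}`. A line `ℓ ≠ ℓ₀` shares with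
`ℓ₀` either exactly one point of `X` or none, according to whether `ℓ ⊓ ℓ₀ ∈ X`
(`card_common_base_points`). For `j ≠ i` the count is always one, so the sum is `d`. For `j = i`
the line `ℓ₀` itself contributes `(s + 1) m(ℓ₀)`, and the other lines contribute `m(ℓ)` exactly
when `ℓ ⊓ ℓ₀ ∈ X`. Comparing with `d = ∑_{ℓ ∈ Li i} m(ℓ)` gives the relation.
-/

open Finset
open scoped Classical

lemma point_eq_inf {V : Type*} [AddCommGroup V] [Module ℂ V] [FiniteDimensional ℂ V]
    {p ℓ ℓ₀ : Submodule ℂ V} (hp : Module.finrank ℂ p = 1) (hℓ : Module.finrank ℂ ℓ = 2)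
    (hℓ₀ : Module.finrank ℂ ℓ₀ = 2) (hne : ℓ ≠ ℓ₀) (h₀ : p ≤ ℓ₀) (h : p ≤ ℓ) :
    p = ℓ ⊓ ℓ₀ := by
  apply Submodule.eq_of_le_of_finrank_le (le_inf h h₀)
  by_contra hlt
  have e : ℓ ⊓ ℓ₀ = ℓ := Submodule.eq_of_le_of_finrank_le inf_le_left (by omega)
  exact hne (Submodule.eq_of_le_of_finrank_le (inf_eq_left.mp e) (by omega))

lemma card_common_base_points {V : Type*} [AddCommGroup V] [Module ℂ V] [FiniteDimensional ℂ V]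
    {X : Finset (Submodule ℂ V)} (hX : ∀ p ∈ X, Module.finrank ℂ p = 1)
    {ℓ ℓ₀ : Submodule ℂ V} (hℓ : Module.finrank ℂ ℓ = 2)
    (hℓ₀ : Module.finrank ℂ ℓ₀ = 2) (hne : ℓ ≠ ℓ₀) :
    ((X.filter (fun p => p ≤ ℓ₀)).filter (fun p => p ≤ ℓ)).card
      = if ℓ ⊓ ℓ₀ ∈ X then 1 else 0 := by
  split_ifs with h
  · rw [Finset.card_eq_one]
    refine ⟨ℓ ⊓ ℓ₀, ?_⟩
    ext p
    simp only [Finset.mem_filter, Finset.mem_singleton]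
    constructor
    · rintro ⟨⟨hp, h₀⟩, h'⟩
      exact point_eq_inf (hX p hp) hℓ hℓ₀ hne h₀ h'
    · rintro rfl
      exact ⟨⟨h, inf_le_right⟩, inf_le_left⟩
  · rw [Finset.card_eq_zero, Finset.filter_eq_empty_iff]
    intro p hp h'
    rw [Finset.mem_filter] at hp
    exact h (point_eq_inf (hX p hp.1) hℓ hℓ₀ hne hp.2 h' ▸ hp.1)

/-- For a weak (k,d)-multinet, ℓ₀ ∈ L_i and
s = |{p ∈ X : p ∈ ℓ₀}| − 1, one has s·m(ℓ₀) = ∑ m(ℓ), summed over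
ℓ ∈ L_i with ℓ ≠ ℓ₀ and ℓ ∩ ℓ₀ ∉ X. -/
theorem weak_multinet_row_relation
    (L : Finset (Submodule ℂ (Fin 3 → ℂ)))
    (hL2 : ∀ ℓ ∈ L, Module.finrank ℂ ℓ = 2)
    (k d : ℕ) (hk : 3 ≤ k)
    (Li : Fin k → Finset (Submodule ℂ (Fin 3 → ℂ)))
    (hsub : ∀ i, Li i ⊆ L)
    (hcover : ∀ ℓ ∈ L, ∃ i, ℓ ∈ Li i)
    (hdisj : ∀ i j, i ≠ j → Disjoint (Li i) (Li j))
    (hne : ∀ i, (Li i).Nonempty)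
    (m : Submodule ℂ (Fin 3 → ℂ) → ℕ)
    (hm : ∀ ℓ ∈ L, 0 < m ℓ)
    (X : Finset (Submodule ℂ (Fin 3 → ℂ)))
    (hX : ∀ p ∈ X, Module.finrank ℂ p = 1 ∧ 3 ≤ (L.filter (fun ℓ => p ≤ ℓ)).card)
    (h1 : ∀ i, ∑ ℓ ∈ Li i, m ℓ = d)
    (h2 : ∀ i j, i ≠ j → ∀ ℓ ∈ Li i, ∀ ℓ' ∈ Li j, ℓ ⊓ ℓ' ∈ X)
    (n : Submodule ℂ (Fin 3 → ℂ) → ℕ)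
    (h3 : ∀ p ∈ X, ∀ i, ∑ ℓ ∈ (Li i).filter (fun ℓ => p ≤ ℓ), m ℓ = n p)
    (i : Fin k) (ℓ₀ : Submodule ℂ (Fin 3 → ℂ)) (hℓ₀ : ℓ₀ ∈ Li i)
    (s : ℤ) (hs : s = ((X.filter (fun p => p ≤ ℓ₀)).card : ℤ) - 1) :
    s * (m ℓ₀ : ℤ)
      = ∑ ℓ ∈ (Li i).filter (fun ℓ => ℓ ≠ ℓ₀ ∧ ℓ ⊓ ℓ₀ ∉ X), (m ℓ : ℤ) := by
  have hrk : ∀ j, ∀ ℓ ∈ Li j, Module.finrank ℂ ℓ = 2 := fun j ℓ hℓ => hL2 ℓ (hsub j hℓ)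
  have count : ∀ ℓ : Submodule ℂ (Fin 3 → ℂ), Module.finrank ℂ ℓ = 2 → ℓ ≠ ℓ₀ →
      ((X.filter (fun p => p ≤ ℓ₀)).filter (fun p => p ≤ ℓ)).card
        = if ℓ ⊓ ℓ₀ ∈ X then 1 else 0 := fun ℓ hℓ hne' =>
    card_common_base_points (fun p hp => (hX p hp).1) hℓ (hrk i ℓ₀ hℓ₀) hne'
  have double : ∀ j, ∑ p ∈ X.filter (fun p => p ≤ ℓ₀), n p = ∑ ℓ ∈ Li j,
      ((X.filter (fun p => p ≤ ℓ₀)).filter (fun p => p ≤ ℓ)).card * m ℓ := by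
    intro j
    calc ∑ p ∈ X.filter (fun p => p ≤ ℓ₀), n p
        = ∑ p ∈ X.filter (fun p => p ≤ ℓ₀), ∑ ℓ ∈ Li j, if p ≤ ℓ then m ℓ else 0 := by
          refine Finset.sum_congr rfl fun p hp => ?_
          rw [← Finset.sum_filter, h3 p (Finset.mem_filter.mp hp).1 j]
      _ = _ := by
          rw [Finset.sum_comm]
          refine Finset.sum_congr rfl fun ℓ _ => ?_
          rw [← Finset.sum_filter, Finset.sum_const, smul_eq_mul]
  -- A second class exists because `3 ≤ k`; every line of it meets `ℓ₀` in a base point.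
  obtain ⟨j, hj⟩ : ∃ j : Fin k, j ≠ i := by
    have : Nontrivial (Fin k) := Fin.nontrivial_iff_two_le.mpr (by omega)
    exact exists_ne i
  have total : ∑ p ∈ X.filter (fun p => p ≤ ℓ₀), n p = d := by
    rw [double j, ← h1 j]
    refine Finset.sum_congr rfl fun ℓ hℓ => ?_
    have hne' : ℓ ≠ ℓ₀ := by
      rintro rfl
      exact Finset.disjoint_left.mp (hdisj j i hj) hℓ hℓ₀
    rw [count ℓ (hrk j ℓ hℓ) hne', if_pos (h2 j i hj ℓ hℓ ℓ₀ hℓ₀), one_mul]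
  have key := (double i).symm.trans (total.trans (h1 i).symm)
  rw [← Finset.add_sum_erase _ _ hℓ₀, ← Finset.add_sum_erase _ _ hℓ₀,
    Finset.filter_filter] at key
  simp only [and_self] at key
  have hin : ∑ ℓ ∈ (Li i).erase ℓ₀,
      ((X.filter (fun p => p ≤ ℓ₀)).filter (fun p => p ≤ ℓ)).card * m ℓ
      = ∑ ℓ ∈ ((Li i).erase ℓ₀).filter (fun ℓ => ℓ ⊓ ℓ₀ ∈ X), m ℓ := by
    rw [Finset.sum_filter]
    refine Finset.sum_congr rfl fun ℓ hℓ => ?_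
    rw [Finset.mem_erase] at hℓ
    rw [count ℓ (hrk i ℓ hℓ.2) hℓ.1, ite_mul, one_mul, zero_mul]
  have hout : (Li i).filter (fun ℓ => ℓ ≠ ℓ₀ ∧ ℓ ⊓ ℓ₀ ∉ X)
      = ((Li i).erase ℓ₀).filter (fun ℓ => ℓ ⊓ ℓ₀ ∉ X) := by
    ext ℓ
    simp only [Finset.mem_filter, Finset.mem_erase]
    tauto
  rw [hin, ← Finset.sum_filter_add_sum_filter_not ((Li i).erase ℓ₀) (fun ℓ => ℓ ⊓ ℓ₀ ∈ X) m]
    at key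
  rw [hs, hout]
  zify at key
  linarith
end

section
/- Let (L₁,…,L_k; m; X) be a multinet on a line arrangement L with m(ℓ) = 1 for every ℓ ∈ L (so each class L_i has exactly d lines). For a point p, let m_p = |{ℓ ∈ L : p ∈ ℓ}|, and let X̄_i be the set of points not in X lying on at least two lines of L_i. Then for every i: d(d−1) = ∑_{p∈X} n_p(n_p−1) + ∑_{p∈X̄_i} m_p(m_p−1). -/
/-!
Double counting of the ordered pairs of distinct lines in a class `Li i`. All multiplicities are 1,
so the class has `d` lines and there are `d (d - 1)` such pairs. Two distinct lines meet in exactly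
one point (`finrank_inf_of_lines`), which lies either in `X` or in `X̄_i`. The pairs meeting at a
given point `p` are the ordered pairs of distinct lines of `Li i` through `p`
(`pair_count`). For `p ∈ X` there are `n_p` such lines. For `p ∈ X̄_i` there are `m_p` of them,
because a line through `p` from another class would meet a line of `Li i` at `p`, forcing `p ∈ X`.
-/

open Finset
open scoped Classical

/-- Two distinct lines of the projective plane meet in a point. -/
lemma finrank_inf_of_lines (a b : Submodule ℂ (Fin 3 → ℂ))
    (ha : Module.finrank ℂ a = 2) (hb : Module.finrank ℂ b = 2) (hab : a ≠ b) :
    Module.finrank ℂ (a ⊓ b : Submodule ℂ (Fin 3 → ℂ)) = 1 := by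
  have hsum := Submodule.finrank_sup_add_finrank_inf_eq a b
  have hle : Module.finrank ℂ (a ⊔ b : Submodule ℂ (Fin 3 → ℂ)) ≤ 3 := by
    simpa using Submodule.finrank_le (a ⊔ b)
  have hlt : Module.finrank ℂ (a ⊓ b : Submodule ℂ (Fin 3 → ℂ)) < 2 := by
    by_contra! h
    have e1 : a ⊓ b = a := Submodule.eq_of_le_of_finrank_le inf_le_left (by omega)
    have e2 : a ⊓ b = b := Submodule.eq_of_le_of_finrank_le inf_le_right (by omega)
    exact hab (e1.symm.trans e2)
  omega

/-- A point on two lines `a`, `b` which meet in a point is their intersection. -/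
lemma eq_inf_of_point (p a b : Submodule ℂ (Fin 3 → ℂ)) (hp : Module.finrank ℂ p = 1)
    (hab : Module.finrank ℂ (a ⊓ b : Submodule ℂ (Fin 3 → ℂ)) = 1)
    (hpa : p ≤ a) (hpb : p ≤ b) : a ⊓ b = p :=
  (Submodule.eq_of_le_of_finrank_le (le_inf hpa hpb) (by omega)).symm

lemma card_offDiag_int {α : Type*} (S : Finset α) :
    (S.offDiag.card : ℤ) = (S.card : ℤ) * ((S.card : ℤ) - 1) := by
  rw [Finset.offDiag_card, Nat.cast_sub (Nat.le_mul_self _)]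
  push_cast
  ring

/-- Counting ordered pairs of distinct lines of `S` by their intersection point, where `Y` is any
set of points that contains all these intersection points. -/
lemma pair_count (S Y : Finset (Submodule ℂ (Fin 3 → ℂ)))
    (hS : ∀ ℓ ∈ S, Module.finrank ℂ ℓ = 2) (hY : ∀ p ∈ Y, Module.finrank ℂ p = 1)
    (hSY : ∀ a ∈ S, ∀ b ∈ S, a ≠ b → a ⊓ b ∈ Y) :
    (S.card : ℤ) * ((S.card : ℤ) - 1)
      = ∑ p ∈ Y, ((S.filter (fun ℓ => p ≤ ℓ)).card : ℤ)
          * (((S.filter (fun ℓ => p ≤ ℓ)).card : ℤ) - 1) := by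
  have hmaps : ∀ x ∈ S.offDiag, x.1 ⊓ x.2 ∈ Y := by
    intro x hx
    rw [Finset.mem_offDiag] at hx
    exact hSY _ hx.1 _ hx.2.1 hx.2.2
  rw [← card_offDiag_int, Finset.card_eq_sum_card_fiberwise hmaps, Nat.cast_sum]
  refine Finset.sum_congr rfl fun p hp => ?_
  rw [← card_offDiag_int]
  congr 2
  ext ⟨a, b⟩
  simp only [Finset.mem_filter, Finset.mem_offDiag]
  constructor
  · rintro ⟨⟨ha, hb, hab⟩, rfl⟩
    exact ⟨⟨ha, inf_le_left⟩, ⟨hb, inf_le_right⟩, hab⟩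
  · rintro ⟨⟨ha, hpa⟩, ⟨hb, hpb⟩, hab⟩
    exact ⟨⟨ha, hb, hab⟩, eq_inf_of_point p a b (hY p hp)
      (finrank_inf_of_lines a b (hS a ha) (hS b hb) hab) hpa hpb⟩

/-- For a multinet with all multiplicities 1, and X̄_i the set of points
outside X lying on at least two lines of L_i (m_p denoting the number of lines of L
through p): d(d−1) = ∑_{p∈X} n_p(n_p−1) + ∑_{p∈X̄_i} m_p(m_p−1), for every i. -/
theorem multinet_reduced_count
    (L : Finset (Submodule ℂ (Fin 3 → ℂ)))
    (hL2 : ∀ ℓ ∈ L, Module.finrank ℂ ℓ = 2)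
    (k d : ℕ) (hk : 3 ≤ k)
    (Li : Fin k → Finset (Submodule ℂ (Fin 3 → ℂ)))
    (hsub : ∀ i, Li i ⊆ L)
    (hcover : ∀ ℓ ∈ L, ∃ i, ℓ ∈ Li i)
    (hdisj : ∀ i j, i ≠ j → Disjoint (Li i) (Li j))
    (hne : ∀ i, (Li i).Nonempty)
    (m : Submodule ℂ (Fin 3 → ℂ) → ℕ)
    (hm : ∀ ℓ ∈ L, 0 < m ℓ)
    (X : Finset (Submodule ℂ (Fin 3 → ℂ)))
    (hX : ∀ p ∈ X, Module.finrank ℂ p = 1 ∧ 3 ≤ (L.filter (fun ℓ => p ≤ ℓ)).card)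
    (h1 : ∀ i, ∑ ℓ ∈ Li i, m ℓ = d)
    (h2 : ∀ i j, i ≠ j → ∀ ℓ ∈ Li i, ∀ ℓ' ∈ Li j, ℓ ⊓ ℓ' ∈ X)
    (n : Submodule ℂ (Fin 3 → ℂ) → ℕ)
    (h3 : ∀ p ∈ X, ∀ i, ∑ ℓ ∈ (Li i).filter (fun ℓ => p ≤ ℓ), m ℓ = n p)
    (h4 : ∀ i, ∀ ℓ ∈ Li i, ∀ ℓ' ∈ Li i,
      Relation.ReflTransGen
        (fun a b => a ∈ Li i ∧ b ∈ Li i ∧ a ≠ b ∧ a ⊓ b ∉ X) ℓ ℓ')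
    (hm1 : ∀ ℓ ∈ L, m ℓ = 1) :
    ∀ i : Fin k, ∀ Xbari : Finset (Submodule ℂ (Fin 3 → ℂ)),
      (∀ p, p ∈ Xbari ↔ Module.finrank ℂ p = 1 ∧ p ∉ X ∧
          2 ≤ ((Li i).filter (fun ℓ => p ≤ ℓ)).card) →
      (d : ℤ) * ((d : ℤ) - 1)
        = ∑ p ∈ X, (n p : ℤ) * ((n p : ℤ) - 1)
          + ∑ p ∈ Xbari,
              ((L.filter (fun ℓ => p ≤ ℓ)).card : ℤ)
                * (((L.filter (fun ℓ => p ≤ ℓ)).card : ℤ) - 1) := by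
  intro i Xbari hXbar
  have hcard : ∀ T ⊆ Li i, ∑ ℓ ∈ T, m ℓ = T.card := by
    intro T hT
    rw [Finset.sum_congr rfl fun ℓ hℓ => hm1 ℓ (hsub i (hT hℓ))]
    simp
  have hd : (Li i).card = d := by rw [← hcard _ subset_rfl, h1]
  have hdis : Disjoint X Xbari := by
    rw [Finset.disjoint_right]
    exact fun p hp => ((hXbar p).1 hp).2.1
  have hLi2 : ∀ ℓ ∈ Li i, Module.finrank ℂ ℓ = 2 := fun ℓ hℓ => hL2 ℓ (hsub i hℓ)
  have key := pair_count (Li i) (X ∪ Xbari) hLi2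
    (by
      intro p hp
      rcases Finset.mem_union.1 hp with hp | hp
      · exact (hX p hp).1
      · exact ((hXbar p).1 hp).1)
    (by
      intro a ha b hb hab
      rw [Finset.mem_union, or_iff_not_imp_left]
      intro hnX
      refine (hXbar _).2 ⟨finrank_inf_of_lines a b (hLi2 a ha) (hLi2 b hb) hab, hnX, ?_⟩
      exact Finset.one_lt_card.2 ⟨a, Finset.mem_filter.2 ⟨ha, inf_le_left⟩,
        b, Finset.mem_filter.2 ⟨hb, inf_le_right⟩, hab⟩)
  rw [hd, Finset.sum_union hdis] at key
  rw [key]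
  congr 1
  · refine Finset.sum_congr rfl fun p hp => ?_
    rw [← h3 p hp i, hcard _ (Finset.filter_subset _ _)]
  · refine Finset.sum_congr rfl fun p hp => ?_
    obtain ⟨hp1, hpX, hp2⟩ := (hXbar p).1 hp
    have hfil : (Li i).filter (fun ℓ => p ≤ ℓ) = L.filter (fun ℓ => p ≤ ℓ) := by
      refine Finset.Subset.antisymm (Finset.filter_subset_filter _ (hsub i)) ?_
      intro b hb
      obtain ⟨hbL, hpb⟩ := Finset.mem_filter.1 hb
      obtain ⟨j, hbj⟩ := hcover b hbL
      by_cases hij : i = j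
      · subst hij
        exact Finset.mem_filter.2 ⟨hbj, hpb⟩
      · obtain ⟨a, ha⟩ := Finset.card_pos.1 (lt_of_lt_of_le Nat.zero_lt_two hp2)
        obtain ⟨hai, hpa⟩ := Finset.mem_filter.1 ha
        have hmem := h2 i j hij a hai b hbj
        rw [eq_inf_of_point p a b hp1 (hX _ hmem).1 hpa hpb] at hmem
        exact absurd hmem hpX
    rw [hfil]
end

section
/- Let (L₁,…,L_k; m; X) be a multinet on a line arrangement L with m(ℓ) = 1 for every ℓ ∈ L. For a point p, let m_p = |{ℓ ∈ L : p ∈ ℓ}|, and let X̄_i be the set of points not in X lying on at least two lines of L_i. Then for every i: ∑_{p∈X} n_p = d + ∑_{p∈X̄_i} m_p(m_p−1). -/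
/-!
With all multiplicities equal to 1, every class has `d` lines and exactly `n p` lines of each class
pass through a base point `p`. Two distinct lines meet in one point, so pairs of lines may be
counted by their intersection point.

* Pairs in `L_i × L_j` with `i ≠ j` meet in `X`, so `d² = ∑_{p ∈ X} n_p²`.
* Ordered pairs of distinct lines of `L_i` meet in `X` or in `X̄_i`. Every line of `L` through a
  point of `X̄_i` lies in `L_i`, since a line of another class would put the point in `X`. Hence
  `d² - d = ∑_{p ∈ X} (n_p² - n_p) + ∑_{p ∈ X̄_i} (m_p² - m_p)`.

Subtracting the second identity from the first gives the claim.
-/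

open Finset
open scoped Classical

theorem finrank_inf_lines {a b : Submodule ℂ (Fin 3 → ℂ)} (ha : Module.finrank ℂ a = 2)
    (hb : Module.finrank ℂ b = 2) (hab : a ≠ b) : Module.finrank ℂ ↥(a ⊓ b) = 1 := by
  have h := Submodule.finrank_sup_add_finrank_inf_eq a b
  have h3 : Module.finrank ℂ ↥(a ⊔ b) ≤ 3 := by
    simpa using Submodule.finrank_le (a ⊔ b)
  have hlt : Module.finrank ℂ ↥(a ⊓ b) < 2 := by
    by_contra hge
    have e1 : a ⊓ b = a := Submodule.eq_of_le_of_finrank_le inf_le_left (by omega)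
    have e2 : a ⊓ b = b := Submodule.eq_of_le_of_finrank_le inf_le_right (by omega)
    exact hab (e1.symm.trans e2)
  omega

theorem inf_lines_eq_iff {a b p : Submodule ℂ (Fin 3 → ℂ)} (ha : Module.finrank ℂ a = 2)
    (hb : Module.finrank ℂ b = 2) (hab : a ≠ b) (hp : Module.finrank ℂ p = 1) :
    a ⊓ b = p ↔ p ≤ a ∧ p ≤ b := by
  constructor
  · rintro rfl
    exact ⟨inf_le_left, inf_le_right⟩
  · rintro ⟨h1, h2⟩
    exact (Submodule.eq_of_le_of_finrank_le (le_inf h1 h2)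
      (by rw [finrank_inf_lines ha hb hab, hp])).symm

/-- Pairs of distinct lines, counted by their intersection point. -/
theorem card_pairs_eq_sum (S : Finset (Submodule ℂ (Fin 3 → ℂ) × Submodule ℂ (Fin 3 → ℂ)))
    (hS : ∀ x ∈ S, Module.finrank ℂ x.1 = 2 ∧ Module.finrank ℂ x.2 = 2 ∧ x.1 ≠ x.2)
    (Y : Finset (Submodule ℂ (Fin 3 → ℂ))) (hY : ∀ p ∈ Y, Module.finrank ℂ p = 1)
    (hSY : ∀ x ∈ S, x.1 ⊓ x.2 ∈ Y) :
    S.card = ∑ p ∈ Y, (S.filter (fun x => p ≤ x.1 ∧ p ≤ x.2)).card := by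
  rw [Finset.card_eq_sum_card_fiberwise (s := S) (t := Y)
    (f := fun x : Submodule ℂ (Fin 3 → ℂ) × Submodule ℂ (Fin 3 → ℂ) => x.1 ⊓ x.2) hSY]
  refine Finset.sum_congr rfl fun p hp => congrArg Finset.card ?_
  refine Finset.filter_congr fun x hx => ?_
  obtain ⟨ha, hb, hab⟩ := hS x hx
  exact inf_lines_eq_iff ha hb hab (hY p hp)

/-- For a multinet with all multiplicities 1, and X̄_i the set of points
outside X lying on at least two lines of L_i (m_p the number of lines of L through p):
∑_{p∈X} n_p = d + ∑_{p∈X̄_i} m_p(m_p−1), for every i. -/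
theorem multinet_reduced_count_np
    (L : Finset (Submodule ℂ (Fin 3 → ℂ)))
    (hL2 : ∀ ℓ ∈ L, Module.finrank ℂ ℓ = 2)
    (k d : ℕ) (hk : 3 ≤ k)
    (Li : Fin k → Finset (Submodule ℂ (Fin 3 → ℂ)))
    (hsub : ∀ i, Li i ⊆ L)
    (hcover : ∀ ℓ ∈ L, ∃ i, ℓ ∈ Li i)
    (hdisj : ∀ i j, i ≠ j → Disjoint (Li i) (Li j))
    (hne : ∀ i, (Li i).Nonempty)
    (m : Submodule ℂ (Fin 3 → ℂ) → ℕ)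
    (hm : ∀ ℓ ∈ L, 0 < m ℓ)
    (X : Finset (Submodule ℂ (Fin 3 → ℂ)))
    (hX : ∀ p ∈ X, Module.finrank ℂ p = 1 ∧ 3 ≤ (L.filter (fun ℓ => p ≤ ℓ)).card)
    (h1 : ∀ i, ∑ ℓ ∈ Li i, m ℓ = d)
    (h2 : ∀ i j, i ≠ j → ∀ ℓ ∈ Li i, ∀ ℓ' ∈ Li j, ℓ ⊓ ℓ' ∈ X)
    (n : Submodule ℂ (Fin 3 → ℂ) → ℕ)
    (h3 : ∀ p ∈ X, ∀ i, ∑ ℓ ∈ (Li i).filter (fun ℓ => p ≤ ℓ), m ℓ = n p)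
    (h4 : ∀ i, ∀ ℓ ∈ Li i, ∀ ℓ' ∈ Li i,
      Relation.ReflTransGen
        (fun a b => a ∈ Li i ∧ b ∈ Li i ∧ a ≠ b ∧ a ⊓ b ∉ X) ℓ ℓ')
    (hm1 : ∀ ℓ ∈ L, m ℓ = 1) :
    ∀ i : Fin k, ∀ Xbari : Finset (Submodule ℂ (Fin 3 → ℂ)),
      (∀ p, p ∈ Xbari ↔ Module.finrank ℂ p = 1 ∧ p ∉ X ∧
          2 ≤ ((Li i).filter (fun ℓ => p ≤ ℓ)).card) →
      ∑ p ∈ X, (n p : ℤ)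
        = (d : ℤ) + ∑ p ∈ Xbari,
            ((L.filter (fun ℓ => p ≤ ℓ)).card : ℤ)
              * (((L.filter (fun ℓ => p ≤ ℓ)).card : ℤ) - 1) := by
  intro i Xbar hXbar
  have hcard : ∀ j, (Li j).card = d := fun j => by
    rw [← h1 j, Finset.card_eq_sum_ones]
    exact Finset.sum_congr rfl fun l hl => (hm1 l (hsub j hl)).symm
  have hn : ∀ p ∈ X, ∀ j, ((Li j).filter (fun l => p ≤ l)).card = n p := fun p hp j => by
    rw [← h3 p hp j, Finset.card_eq_sum_ones]
    exact Finset.sum_congr rfl fun l hl =>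
      (hm1 l (hsub j (Finset.mem_filter.1 hl).1)).symm
  obtain ⟨j, hj⟩ : ∃ j : Fin k, i ≠ j := by
    by_cases h : i = ⟨0, by omega⟩
    · exact ⟨⟨1, by omega⟩, by subst h; simp [Fin.ext_iff]⟩
    · exact ⟨_, h⟩
  have hcross : d * d = ∑ p ∈ X, n p * n p := by
    have h := card_pairs_eq_sum (Li i ×ˢ Li j)
      (fun x hx => by
        obtain ⟨ha, hb⟩ := Finset.mem_product.1 hx
        exact ⟨hL2 _ (hsub i ha), hL2 _ (hsub j hb), fun e =>
          Finset.disjoint_left.1 (hdisj i j hj) ha (e ▸ hb)⟩)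
      X (fun p hp => (hX p hp).1)
      (fun x hx => h2 i j hj _ (Finset.mem_product.1 hx).1 _ (Finset.mem_product.1 hx).2)
    rw [Finset.card_product, hcard, hcard] at h
    rw [h]
    refine Finset.sum_congr rfl fun p hp => ?_
    have e : (Li i ×ˢ Li j).filter (fun x => p ≤ x.1 ∧ p ≤ x.2)
        = (Li i).filter (fun l => p ≤ l) ×ˢ (Li j).filter (fun l => p ≤ l) := by
      ext x
      simp only [Finset.mem_filter, Finset.mem_product]
      tauto
    rw [e, Finset.card_product, hn p hp, hn p hp]
  -- A line of another class through a point of `X̄_i` would force that point into `X`.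
  have hmp : ∀ p ∈ Xbar, (Li i).filter (fun l => p ≤ l) = L.filter (fun l => p ≤ l) := by
    intro p hp
    obtain ⟨hp1, hpX, hp2⟩ := (hXbar p).1 hp
    obtain ⟨a, ha⟩ := Finset.card_pos.1 (lt_of_lt_of_le Nat.zero_lt_two hp2)
    obtain ⟨ha, hpa⟩ := Finset.mem_filter.1 ha
    refine Finset.Subset.antisymm (Finset.filter_subset_filter _ (hsub i)) fun b hb => ?_
    obtain ⟨hb, hpb⟩ := Finset.mem_filter.1 hb
    refine Finset.mem_filter.2 ⟨?_, hpb⟩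
    by_contra hbi
    obtain ⟨t, hbt⟩ := hcover b hb
    have hit : i ≠ t := by
      rintro rfl
      exact hbi hbt
    have hab : a ≠ b := by
      rintro rfl
      exact hbi ha
    have hmeet := h2 i t hit a ha b hbt
    rw [(inf_lines_eq_iff (hL2 a (hsub i ha)) (hL2 b hb) hab hp1).2 ⟨hpa, hpb⟩] at hmeet
    exact hpX hmeet
  have hsplit : Disjoint X Xbar :=
    Finset.disjoint_right.2 fun p hp => ((hXbar p).1 hp).2.1
  have hfib : ∀ p : Submodule ℂ (Fin 3 → ℂ),
      (((Li i).offDiag.filter (fun x => p ≤ x.1 ∧ p ≤ x.2)).card : ℤ)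
        = (((Li i).filter (fun l => p ≤ l)).card : ℤ)
          * (((Li i).filter (fun l => p ≤ l)).card - 1) := by
    intro p
    have e : (Li i).offDiag.filter (fun x => p ≤ x.1 ∧ p ≤ x.2)
        = ((Li i).filter (fun l => p ≤ l)).offDiag := by
      ext x
      simp only [Finset.mem_filter, Finset.mem_offDiag]
      tauto
    rw [e, Finset.offDiag_card, Nat.cast_sub (Nat.le_mul_self _)]
    push_cast
    ring
  have hself : (d : ℤ) * (d - 1) = ∑ p ∈ X, (n p : ℤ) * (n p - 1)
      + ∑ p ∈ Xbar, ((L.filter (fun l => p ≤ l)).card : ℤ)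
          * (((L.filter (fun l => p ≤ l)).card : ℤ) - 1) := by
    have h := card_pairs_eq_sum (Li i).offDiag
      (fun x hx => by
        obtain ⟨ha, hb, hab⟩ := Finset.mem_offDiag.1 hx
        exact ⟨hL2 _ (hsub i ha), hL2 _ (hsub i hb), hab⟩)
      (X ∪ Xbar)
      (fun p hp => (Finset.mem_union.1 hp).elim (fun h => (hX p h).1) fun h => ((hXbar p).1 h).1)
      (fun x hx => by
        obtain ⟨ha, hb, hab⟩ := Finset.mem_offDiag.1 hx
        by_cases hxX : x.1 ⊓ x.2 ∈ X
        · exact Finset.mem_union_left _ hxX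
        · refine Finset.mem_union_right _ ((hXbar _).2
            ⟨finrank_inf_lines (hL2 _ (hsub i ha)) (hL2 _ (hsub i hb)) hab, hxX, ?_⟩)
          exact Finset.one_lt_card.2 ⟨x.1, Finset.mem_filter.2 ⟨ha, inf_le_left⟩,
            x.2, Finset.mem_filter.2 ⟨hb, inf_le_right⟩, hab⟩)
    rw [Finset.sum_union hsplit, Finset.offDiag_card, hcard] at h
    have hz := congrArg (Nat.cast : ℕ → ℤ) h
    rw [Nat.cast_sub (Nat.le_mul_self d)] at hz
    push_cast at hz
    rw [mul_sub, mul_one, hz]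
    congr 1
    · refine Finset.sum_congr rfl fun p hp => ?_
      rw [hfib, hn p hp]
    · refine Finset.sum_congr rfl fun p hp => ?_
      rw [hfib, hmp p hp]
  have hcross' : (d : ℤ) * d = ∑ p ∈ X, (n p : ℤ) * n p := by exact_mod_cast hcross
  simp only [mul_sub, mul_one, Finset.sum_sub_distrib] at hself ⊢
  linarith
end

section
/- (Bound on the number of classes.) If a line arrangement L in the complex projective plane supports a (k,d)-multinet (L₁,…,L_k; m; X) with d > 1 and m(ℓ) = 1 for every ℓ ∈ L, then k ≤ 5. -/
/-!
The bound comes from counting the lines as components of the Hessian curve of a pencil.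

Let `F` and `G` be the products of the equations of the lines in two of the classes; both are forms
of degree `d`. Through a general point `p` passes one member of the pencil spanned by `F` and `G`,
namely `G(p) F - F(p) G`, and `p` is a zero of its Hessian exactly when the form
`P = det (G · D²F - F · D²G)`, of degree `3 (2d - 2) = 6d - 6`, vanishes at `p`
(`pencilHessian`, `pencilHessian_homog`).

* Every line `ℓ` of the arrangement divides `P`. If `ℓ` lies in a third class, then, the numbers
  `n_p` being independent of the class, the lines of the first two classes cut the same divisor
  on `ℓ` (`fibres_eq`), so `F` and `G` are proportional on `ℓ` (`prod_restrict_proportional`). Hence in every case `ℓ` divides some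
  combination `αF + βG` with `(α, β) ≠ 0`, and at a point of `ℓ` the matrix is a multiple of the Hessian
  matrix of `αF + βG = ℓK`, which has rank at most two there (`pencilHessian_vanish`).
* `P` is not zero. As `d > 1`, connectedness provides two lines `ℓ₀ ≠ ℓ₁` of the first class meeting
  at a point `q` outside the base locus. In coordinates with `ℓ₀ = {z = 0}` and `q = (1 : 0 : 0)`
  write `F = z H`. With `g(t) = G(1, t, 0)` and `h(t) = H(1, t, 0)`, Euler's identities show that
  `P / z` restricted to `ℓ₀` equals, up to a nonzero constant, `g² h⁴` times the second
  derivative of `g / h`. Since `h(0) = 0` and `g(0) ≠ 0`, the function `g / h` has a pole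
  at `0`, and so has its second derivative (`quot_deriv_ne`, `pencilHessian_ne_zero`).

The `k d` pairwise nonproportional linear forms therefore divide a nonzero form of degree `6d - 6`
(`card_lines_le`), whence `k d ≤ 6d - 6` and `k ≤ 5`.
-/

open Finset
open scoped Classical

namespace Multinet
open MvPolynomial
open scoped Polynomial

/-! ### Linear forms -/

/-- The linear form `a₀ x₀ + a₁ x₁ + a₂ x₂`. -/
noncomputable def lin (a : Fin 3 → ℂ) : MvPolynomial (Fin 3) ℂ := ∑ i, C (a i) * X i

lemma eval_lin (a x : Fin 3 → ℂ) : eval x (lin a) = ∑ i, a i * x i := by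
  simp [lin]

lemma lin_homog (a : Fin 3 → ℂ) : (lin a).IsHomogeneous 1 := by
  refine IsHomogeneous.sum _ _ _ fun i _ => ?_
  simpa using (isHomogeneous_C (Fin 3) (a i)).mul (isHomogeneous_X ℂ i)

lemma lin_prime {a : Fin 3 → ℂ} (ha : a ≠ 0) : Prime (lin a) := by
  obtain ⟨i, hi⟩ : ∃ i, a i ≠ 0 := by
    by_contra! h
    exact ha (funext h)
  have hne : lin a ≠ 0 := by
    intro h
    have := eval_lin a (Pi.single i 1)
    rw [h] at this
    simp [Pi.single_apply] at this
    exact hi this.symm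
  refine (irreducible_of_totalDegree_eq_one ((lin_homog a).totalDegree hne) fun x hx => ?_).prime
  have h1 : coeff (Finsupp.single i 1) (lin a) = a i := by
    simp [lin, coeff_sum, coeff_C_mul, coeff_X, Finsupp.single_left_inj]
  have := hx (Finsupp.single i 1)
  rw [h1] at this
  exact (isUnit_of_dvd_unit this (isUnit_iff_ne_zero.2 hi))

/-- A polynomial vanishing on the plane `lin a = 0` is divisible by `lin a`, by the Nullstellensatz
and the primality of `lin a`. -/
lemma lin_dvd {a : Fin 3 → ℂ} (ha : a ≠ 0) {P : MvPolynomial (Fin 3) ℂ}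
    (h : ∀ x, eval x (lin a) = 0 → eval x P = 0) : lin a ∣ P := by
  have hp : (Ideal.span {lin a}).IsPrime :=
    (Ideal.span_singleton_prime (lin_prime ha).ne_zero).2 (lin_prime ha)
  rw [← Ideal.mem_span_singleton, ← hp.radical,
    ← vanishingIdeal_zeroLocus_eq_radical (K := ℂ)]
  rw [mem_vanishingIdeal_iff]
  intro x hx
  rw [mem_zeroLocus_iff] at hx
  have := hx _ (Ideal.mem_span_singleton_self _)
  simp only [← coe_aeval_eq_eval] at h
  exact h x this

/-! ### The Hessian of a pencil -/

/-- The `(i, j)` entry `G ∂ᵢ∂ⱼF - F ∂ᵢ∂ⱼG` of the matrix whose value at `p` is the Hessian matrix at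
`p` of the member `G(p) F - F(p) G` of the pencil that passes through `p`. -/
noncomputable def pencilEntry (F G : MvPolynomial (Fin 3) ℂ) (i j : Fin 3) :
    MvPolynomial (Fin 3) ℂ :=
  G * pderiv i (pderiv j F) - F * pderiv i (pderiv j G)

/-- The determinant `det (G · D²F - F · D²G)`, whose zeros are the points at which the member of the
pencil through that point has vanishing Hessian. -/
noncomputable def pencilHessian (F G : MvPolynomial (Fin 3) ℂ) : MvPolynomial (Fin 3) ℂ :=
  (Matrix.of (pencilEntry F G)).det

lemma pencilHessian_homog {F G : MvPolynomial (Fin 3) ℂ} {e : ℕ} (hF : F.IsHomogeneous (e + 2))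
    (hG : G.IsHomogeneous (e + 2)) : (pencilHessian F G).IsHomogeneous (6 * (e + 1)) := by
  have hm : ∀ i j, (pencilEntry F G i j).IsHomogeneous (2 * (e + 1)) := by
    intro i j
    have he : 2 * (e + 1) = e + 2 + (e + 2 - 1 - 1) := by omega
    rw [he]
    exact (hG.mul hF.pderiv.pderiv).sub (hF.mul hG.pderiv.pderiv)
  rw [pencilHessian, Matrix.det_apply]
  refine IsHomogeneous.sum _ _ _ fun s _ => ?_
  have := IsHomogeneous.prod univ (fun i => pencilEntry F G (s i) i) (fun _ => 2 * (e+1))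
    fun i _ => hm _ _
  have h6 : ∑ _i : Fin 3, 2 * (e+1) = 6 * (e+1) := by simp; ring
  rw [h6] at this
  rcases Int.units_eq_one_or (Equiv.Perm.sign s) with h | h
  · simpa [h] using this
  · simpa [h] using this.neg

/-- If a line divides a combination `αF + βG` with `(α, β) ≠ 0`, then the pencil Hessian vanishes on
it: at a point of the line the matrix is a multiple of the Hessian matrix of `lin a * K`, which is
`a ⊗ ∇K + ∇K ⊗ a` there. -/
lemma pencilHessian_vanish {F G : MvPolynomial (Fin 3) ℂ} {a : Fin 3 → ℂ} {α β : ℂ}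
    (hαβ : α ≠ 0 ∨ β ≠ 0) (hdvd : lin a ∣ C α * F + C β * G) (x : Fin 3 → ℂ)
    (hx : eval x (lin a) = 0) : eval x (pencilHessian F G) = 0 := by
  obtain ⟨K, hK⟩ := hdvd
  have h0 : α * eval x F + β * eval x G = 0 := by
    have := congrArg (eval x) hK
    simpa [hx] using this
  -- `(F(x), G(x))` is proportional to `(-β, α)`.
  obtain ⟨r, hr1, hr2⟩ : ∃ r, eval x G = r * α ∧ eval x F = - (r * β) := by
    rcases hαβ with h | h
    · refine ⟨eval x G / α, by field_simp, ?_⟩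
      field_simp
      linear_combination h0
    · refine ⟨-eval x F / β, ?_, by field_simp⟩
      field_simp
      linear_combination h0
  have hlin : ∀ i, pderiv i (lin a) = C (a i) := by
    intro i
    simp [lin, Pi.single_apply, pderiv_X]
  have hent : ∀ i j, eval x (pencilEntry F G i j) =
      r * (a i * eval x (pderiv j K) + a j * eval x (pderiv i K)) := by
    intro i j
    have h2 := congrArg (fun P => eval x (pderiv i (pderiv j P))) hK
    simp [hlin, Derivation.leibniz, hx] at h2
    simp only [pencilEntry, map_sub, map_mul, hr1, hr2]
    linear_combination r * h2
  rw [pencilHessian, Matrix.det_fin_three]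
  simp only [Matrix.of_apply, map_sub, map_add, map_mul, hent]
  ring

/-! ### Nonvanishing of the pencil Hessian -/

/-- The numerator of the second derivative of `g / h` over the denominator `h³` is nonzero when
`g / h` has a pole at `0`: if `h` has order `r + 1` at `0` and `h = t ^ (r + 1) * k`, its
coefficient at `t ^ (2 * r)` is `(r + 1) (r + 2) g(0) k(0)²`. -/
lemma quot_deriv_ne {g h : Polynomial ℂ} (hg : g.eval 0 ≠ 0) (hh : h ≠ 0) (h0 : h.eval 0 = 0) :
    g.derivative.derivative * h ^ 2 - 2 * g.derivative * h.derivative * h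
      - g * h.derivative.derivative * h + 2 * g * h.derivative ^ 2 ≠ 0 := by
  intro hR
  obtain ⟨k, hk, hnd⟩ := Polynomial.exists_eq_pow_rootMultiplicity_mul_and_not_dvd h hh 0
  have hr : h.rootMultiplicity 0 ≠ 0 := by
    have := (Polynomial.rootMultiplicity_pos hh).2 (show h.IsRoot 0 from h0)
    omega
  obtain ⟨r, hr⟩ := Nat.exists_eq_succ_of_ne_zero hr
  rw [hr, map_zero, sub_zero, Nat.succ_eq_add_one] at hk
  rw [map_zero, sub_zero, Polynomial.X_dvd_iff, Polynomial.coeff_zero_eq_eval_zero] at hnd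
  set t : Polynomial ℂ := Polynomial.X with ht
  have e1 : t * h.derivative = t ^ (r+1) * ((r+1 : ℂ[X]) * k + t * k.derivative) := by
    rw [hk]; simp [ht]; ring
  have e2 : t ^ 2 * h.derivative.derivative = t ^ (r+1) *
      ((r+1 : ℂ[X]) * r * k + 2 * (r+1) * t * k.derivative + t ^ 2 * k.derivative.derivative) := by
    have h3 := congrArg Polynomial.derivative e1
    simp [ht] at h3
    rw [← ht] at h3
    have h4 : t * h.derivative.derivative = _ - h.derivative := eq_sub_of_add_eq' h3
    calc _ = t * (t * h.derivative.derivative) := by ring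
      _ = _ := by rw [h4, mul_sub, e1]; ring
  have key : t ^ (2 * (r+1)) * (t ^ 2 * g.derivative.derivative * k ^ 2
      - 2 * t * g.derivative * ((r+1 : ℂ[X]) * k + t * k.derivative) * k
      - g * ((r+1 : ℂ[X]) * r * k + 2 * (r+1) * t * k.derivative + t ^ 2 * k.derivative.derivative) * k
      + 2 * g * ((r+1 : ℂ[X]) * k + t * k.derivative) ^ 2) = 0 := by
    have h5 : t ^ 2 * (g.derivative.derivative * h ^ 2 - 2 * g.derivative * h.derivative * h
      - g * h.derivative.derivative * h + 2 * g * h.derivative ^ 2) = 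
      t ^ 2 * g.derivative.derivative * h ^ 2 - 2 * t * g.derivative * (t * h.derivative) * h
      - g * (t ^ 2 * h.derivative.derivative) * h + 2 * g * (t * h.derivative) ^ 2 := by ring
    rw [hR, e1, e2, mul_zero] at h5
    rw [h5, hk]
    ring
  have key2 := (mul_eq_zero.1 key).resolve_left (pow_ne_zero _ Polynomial.X_ne_zero)
  have key3 := congrArg (Polynomial.eval 0) key2
  simp [ht] at key3
  have h6 : g.eval 0 * (k.eval 0)^2 * (((r+1) * (r+2) : ℕ) : ℂ) = 0 := by
    push_cast
    linear_combination key3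
  have h7 : (((r+1) * (r+2) : ℕ) : ℂ) ≠ 0 :=
    Nat.cast_ne_zero.2 (by positivity)
  exact mul_ne_zero (mul_ne_zero hg (pow_ne_zero _ hnd)) h7 h6

/-- Restriction of a form to the line `z = 0`, in the affine coordinate `t` with
`(x, y, z) = (1, t, 0)`. -/
noncomputable def res : MvPolynomial (Fin 3) ℂ →ₐ[ℂ] ℂ[X] := aeval ![1, Polynomial.X, 0]

lemma derivative_res (P : MvPolynomial (Fin 3) ℂ) :
    (res P).derivative = res (pderiv 1 P) := by
  induction P using MvPolynomial.induction_on with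
  | C a => simp [res]
  | add p q hp hq => simp [hp, hq]
  | mul_X p i hp =>
    simp only [map_mul, Polynomial.derivative_mul, hp, Derivation.leibniz, map_add, smul_eq_mul]
    fin_cases i <;> (simp [res, pderiv_X]; try ring)

/-- Euler's identity restricted to `z = 0` expresses `∂₀P` through the restriction of `P`. -/
lemma res_euler {P : MvPolynomial (Fin 3) ℂ} {n : ℕ} (hP : P.IsHomogeneous n) :
    res (pderiv 0 P) = (n : ℂ[X]) * res P - Polynomial.X * (res P).derivative := by
  have := congrArg res hP.sum_X_mul_pderiv
  rw [derivative_res]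
  simp [Fin.sum_univ_three, res] at this
  exact eq_sub_of_add_eq this

/-- If `z = 0` is a component of `z H = 0` which `H = 0` meets at `(1 : 0 : 0)`, a point not on
`G = 0`, and if `H` does not vanish identically on `z = 0`, then the pencil Hessian of `z H` and `G`
is not zero. -/
lemma pencilHessian_ne_zero {G H : MvPolynomial (Fin 3) ℂ} {e : ℕ} (hG : G.IsHomogeneous (e + 2))
    (hH : H.IsHomogeneous (e + 1)) (hg0 : (res G).eval 0 ≠ 0) (hh0 : (res H).eval 0 = 0)
    (hh : res H ≠ 0) : pencilHessian (X 2 * H) G ≠ 0 := by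
  intro hP
  have hfac : pencilHessian (X 2 * H) G = X 2 *
      ((pencilEntry H G 0 0) * (X 2 * pencilEntry H G 1 1 * pencilEntry (X 2 * H) G 2 2 -
          pencilEntry (X 2 * H) G 1 2 * pencilEntry (X 2 * H) G 2 1)
        - pencilEntry H G 0 1 * (X 2 * pencilEntry H G 1 0 * pencilEntry (X 2 * H) G 2 2 -
          pencilEntry (X 2 * H) G 1 2 * pencilEntry (X 2 * H) G 2 0)
        + pencilEntry (X 2 * H) G 0 2 * (pencilEntry H G 1 0 * pencilEntry (X 2 * H) G 2 1 -
          pencilEntry H G 1 1 * pencilEntry (X 2 * H) G 2 0)) := by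
    have hz : ∀ i j : Fin 3, i ≠ 2 → j ≠ 2 →
        pencilEntry (X 2 * H) G i j = X 2 * pencilEntry H G i j := by
      intro i j hi hj
      simp [pencilEntry, Derivation.leibniz, pderiv_X, hi, hj]
      ring
    rw [pencilHessian, Matrix.det_fin_three]
    simp only [Matrix.of_apply]
    rw [hz 0 0, hz 0 1, hz 1 0, hz 1 1]
    · ring
    all_goals decide
  rw [hfac] at hP
  have hS := congrArg res ((mul_eq_zero.1 hP).resolve_left (X_ne_zero 2))
  have rX : res (X 2) = 0 := by simp [res]
  have r02 : res (pencilEntry (X 2 * H) G 0 2) = res G * res (pderiv 0 H) := by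
    simp [pencilEntry, Derivation.leibniz, pderiv_X, rX]
  have r12 : res (pencilEntry (X 2 * H) G 1 2) = res G * res (pderiv 1 H) := by
    simp [pencilEntry, Derivation.leibniz, pderiv_X, rX]
  have r20 : res (pencilEntry (X 2 * H) G 2 0) = res G * res (pderiv 0 H) := by
    simp [pencilEntry, Derivation.leibniz, pderiv_X, rX]
  have r21 : res (pencilEntry (X 2 * H) G 2 1) = res G * res (pderiv 1 H) := by
    simp [pencilEntry, Derivation.leibniz, pderiv_X, rX]
  simp only [map_add, map_sub, map_mul, map_zero, r02, r12, r20, r21, rX] at hS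
  have hH0 : (pderiv 0 H).IsHomogeneous e := hH.pderiv
  have hH1 : (pderiv 1 H).IsHomogeneous e := hH.pderiv
  have hG0 : (pderiv 0 G).IsHomogeneous (e+1) := hG.pderiv
  have hG1 : (pderiv 1 G).IsHomogeneous (e+1) := hG.pderiv
  simp only [pencilEntry, map_sub, map_mul, res_euler hH0, res_euler hH1, res_euler hG0,
    res_euler hG1, ← derivative_res, res_euler hH, res_euler hG] at hS
  -- The left-hand side of `hS` is, up to sign, `(e + 1)² g² h` times the numerator of the second
  -- derivative of `g / h`.
  have hne := quot_deriv_ne hg0 hh hh0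
  have hgne : res G ≠ 0 := by rintro h; simp [h] at hg0
  have he : ((e : ℂ[X]) + 1) ≠ 0 := by exact_mod_cast Nat.succ_ne_zero e
  refine mul_ne_zero (mul_ne_zero (mul_ne_zero (pow_ne_zero 2 he) (pow_ne_zero 2 hgne)) hh) hne ?_
  simp at hS
  linear_combination hS

/-! ### Counting lines -/

lemma card_lines_le {ι : Type*} (S : Finset ι) (A : ι → Fin 3 → ℂ) (hA : ∀ s ∈ S, A s ≠ 0)
    (hpair : ∀ s ∈ S, ∀ t ∈ S, s ≠ t → ¬ lin (A s) ∣ lin (A t))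
    {P : MvPolynomial (Fin 3) ℂ} {N : ℕ} (hP : P.IsHomogeneous N) (hP0 : P ≠ 0)
    (hdvd : ∀ s ∈ S, lin (A s) ∣ P) : S.card ≤ N := by
  have h1 : ∏ s ∈ S, lin (A s) ∣ P := by
    refine Finset.prod_dvd_of_isRelPrime ?_ hdvd
    intro s hs t ht hst
    exact (lin_prime (hA s hs)).irreducible.isRelPrime_iff_not_dvd.2 (hpair s hs t ht hst)
  have h2 : (∏ s ∈ S, lin (A s)).IsHomogeneous S.card := by
    simpa using IsHomogeneous.prod S (fun s => lin (A s)) (fun _ => 1) fun s _ => lin_homog _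
  have h3 : ∏ s ∈ S, lin (A s) ≠ 0 :=
    Finset.prod_ne_zero_iff.2 fun s hs => (lin_prime (hA s hs)).ne_zero
  have := totalDegree_le_of_dvd_of_isDomain h1 hP0
  rw [h2.totalDegree h3, hP.totalDegree hP0] at this
  exact this

/-! ### Restriction of classes to a line -/

lemma exists_equation (ℓ : Submodule ℂ (Fin 3 → ℂ)) (h : Module.finrank ℂ ℓ = 2) :
    ∃ φ : (Fin 3 → ℂ) →ₗ[ℂ] ℂ, LinearMap.ker φ = ℓ := by
  have hlt : ℓ < ⊤ := by
    refine lt_top_iff_ne_top.2 ?_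
    rintro rfl
    simp at h
  obtain ⟨φ, hφ, hle⟩ := Submodule.exists_le_ker_of_lt_top ℓ hlt
  refine ⟨φ, (Submodule.eq_of_le_of_finrank_eq hle ?_).symm⟩
  have h1 := LinearMap.finrank_range_add_finrank_ker φ
  have h2 : Module.finrank ℂ (LinearMap.range φ) = 1 := by
    rw [LinearMap.range_eq_top.2 (LinearMap.surjective hφ)]
    simp
  simp at h1
  omega

lemma restrict_proportional {V : Type*} [AddCommGroup V] [Module ℂ V]
    (φ ψ : V →ₗ[ℂ] ℂ) (ℓ : Submodule ℂ V)
    (h : ℓ ⊓ LinearMap.ker φ = ℓ ⊓ LinearMap.ker ψ) :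
    ∃ c : ℂ, ∀ x ∈ ℓ, φ x = c * ψ x := by
  by_cases hψ : ∀ x ∈ ℓ, ψ x = 0
  · refine ⟨0, fun x hx => ?_⟩
    have : x ∈ ℓ ⊓ LinearMap.ker φ := by
      rw [h]
      exact ⟨hx, hψ x hx⟩
    simpa using this.2
  · push Not at hψ
    obtain ⟨y, hy, hy0⟩ := hψ
    refine ⟨φ y / ψ y, fun x hx => ?_⟩
    have : x - (ψ x / ψ y) • y ∈ ℓ ⊓ LinearMap.ker φ := by
      rw [h]
      refine ⟨ℓ.sub_mem hx (ℓ.smul_mem _ hy), ?_⟩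
      simp [hy0]
    have h2 : φ x - ψ x / ψ y * φ y = 0 := by simpa using this.2
    field_simp at h2 ⊢
    linear_combination h2

/-- If two sets of lines cut the same multiset of points on `ℓ`, the products of their equations are
proportional on `ℓ`. -/
lemma prod_restrict_proportional (φ : Submodule ℂ (Fin 3 → ℂ) → ((Fin 3 → ℂ) →ₗ[ℂ] ℂ))
    (ℓ : Submodule ℂ (Fin 3 → ℂ)) (S T : Finset (Submodule ℂ (Fin 3 → ℂ)))
    (hS : ∀ l ∈ S, LinearMap.ker (φ l) = l) (hT : ∀ l ∈ T, LinearMap.ker (φ l) = l)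
    (hfib : S.val.map (fun l => ℓ ⊓ l) = T.val.map (fun l => ℓ ⊓ l)) :
    ∃ c : ℂ, ∀ x ∈ ℓ, ∏ l ∈ S, φ l x = c * ∏ l ∈ T, φ l x := by
  have hrel : Multiset.Rel (fun a b => ∃ c : ℂ, ∀ x ∈ ℓ, φ a x = c * φ b x) S.val T.val := by
    rw [← Multiset.rel_eq, Multiset.rel_map] at hfib
    refine hfib.mono fun a ha b hb hab => restrict_proportional _ _ _ ?_
    rw [hS a ha, hT b hb]
    exact hab
  have : ∀ s t, Multiset.Rel (fun a b => ∃ c : ℂ, ∀ x ∈ ℓ, φ a x = c * φ b x) s t →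
      ∃ c : ℂ, ∀ x ∈ ℓ, (s.map fun l => φ l x).prod = c * (t.map fun l => φ l x).prod := by
    intro s t h
    induction h with
    | zero => exact ⟨1, by simp⟩
    | cons hab _ ih =>
      obtain ⟨c, hc⟩ := hab
      obtain ⟨c', hc'⟩ := ih
      refine ⟨c * c', fun x hx => ?_⟩
      simp only [Multiset.map_cons, Multiset.prod_cons, hc x hx, hc' x hx]
      ring
  exact this _ _ hrel

/-- Two classes meeting `ℓ` only in points of `X`, with equally many lines through each point of `X`,
cut the same multiset of points on `ℓ`. -/
lemma fibres_eq (X : Finset (Submodule ℂ (Fin 3 → ℂ)))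
    (hX : ∀ p ∈ X, Module.finrank ℂ p = 1)
    (ℓ : Submodule ℂ (Fin 3 → ℂ)) (S T : Finset (Submodule ℂ (Fin 3 → ℂ)))
    (hS : ∀ l ∈ S, ℓ ⊓ l ∈ X) (hT : ∀ l ∈ T, ℓ ⊓ l ∈ X)
    (hn : ∀ p ∈ X, (S.filter fun l => p ≤ l).card = (T.filter fun l => p ≤ l).card) :
    S.val.map (fun l => ℓ ⊓ l) = T.val.map (fun l => ℓ ⊓ l) := by
  have aux : ∀ p ∈ X, p ≤ ℓ → ∀ l, ℓ ⊓ l ∈ X → (p = ℓ ⊓ l ↔ p ≤ l) := by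
    intro p hp hpl l hl
    constructor
    · rintro h
      rw [h]
      exact inf_le_right
    · intro h
      exact Submodule.eq_of_le_of_finrank_eq (le_inf hpl h) (by rw [hX p hp, hX _ hl])
  have cnt : ∀ (U : Finset (Submodule ℂ (Fin 3 → ℂ))) (p), (∀ l ∈ U, ℓ ⊓ l ∈ X) →
      (U.val.map (fun l => ℓ ⊓ l)).count p =
        if p ∈ X ∧ p ≤ ℓ then (U.filter fun l => p ≤ l).card else 0 := by
    intro U p hU
    split_ifs with hp
    · rw [Multiset.count_map, Finset.card_def, Finset.filter_val]
      congr 1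
      exact Multiset.filter_congr fun l hl => aux p hp.1 hp.2 l (hU l hl)
    · rw [Multiset.count_eq_zero]
      intro hmem
      obtain ⟨l, hl, rfl⟩ := Multiset.mem_map.1 hmem
      exact hp ⟨hU l hl, inf_le_left⟩
  ext p
  rw [cnt S p hS, cnt T p hT]
  split_ifs with hp
  · exact hn p hp.1
  · rfl

/-! ### Coordinates adapted to two lines -/

/-- Coordinates in which `(1 : 0 : 0)` is the common point of `ℓ₀` and `ℓ₁`, and `ℓ₀` is the line
spanned by the first two coordinate points. -/
lemma exists_frame {ℓ₀ ℓ₁ : Submodule ℂ (Fin 3 → ℂ)} (h0 : Module.finrank ℂ ℓ₀ = 2)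
    (h1 : Module.finrank ℂ ℓ₁ = 2) (hne : ℓ₀ ≠ ℓ₁) :
    ∃ T : (Fin 3 → ℂ) ≃ₗ[ℂ] (Fin 3 → ℂ), T (Pi.single 0 1) ∈ ℓ₀ ⊓ ℓ₁ ∧
      T (Pi.single 1 1) ∈ ℓ₀ := by
  obtain ⟨q, hq, hq0⟩ : ∃ q ∈ ℓ₀ ⊓ ℓ₁, q ≠ 0 := by
    rw [← Submodule.ne_bot_iff]
    intro hbot
    have h2 := Submodule.finrank_sup_add_finrank_inf_eq ℓ₀ ℓ₁
    have h3 := Submodule.finrank_le (ℓ₀ ⊔ ℓ₁)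
    rw [hbot, h0, h1] at h2
    simp at h2 h3
    omega
  obtain ⟨v, hv0, hv1⟩ : ∃ v ∈ ℓ₀, v ∉ ℓ₁ := by
    by_contra! h
    exact hne (Submodule.eq_of_le_of_finrank_eq h (by rw [h0, h1]))
  obtain ⟨w, hw1, hw0⟩ : ∃ w ∈ ℓ₁, w ∉ ℓ₀ := by
    by_contra! h
    exact hne (Submodule.eq_of_le_of_finrank_eq h (by rw [h0, h1])).symm
  have hli : LinearIndependent ℂ ![q, v, w] := by
    rw [Fintype.linearIndependent_iff]
    intro g hg
    simp only [Fin.sum_univ_three, Matrix.cons_val_zero, Matrix.cons_val_one,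
      Matrix.cons_val_two] at hg
    have g2 : g 2 = 0 := by
      by_contra h
      refine hw0 ((ℓ₀.smul_mem_iff h).1 ?_)
      rw [show g 2 • w = -(g 0 • q + g 1 • v) from (neg_eq_of_add_eq_zero_right hg).symm]
      exact ℓ₀.neg_mem (ℓ₀.add_mem (ℓ₀.smul_mem _ hq.1) (ℓ₀.smul_mem _ hv0))
    rw [g2, zero_smul, add_zero] at hg
    have g1 : g 1 = 0 := by
      by_contra h
      refine hv1 ((ℓ₁.smul_mem_iff h).1 ?_)
      rw [show g 1 • v = -(g 0 • q) from (neg_eq_of_add_eq_zero_right hg).symm]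
      exact ℓ₁.neg_mem (ℓ₁.smul_mem _ hq.2)
    rw [g1, zero_smul, add_zero] at hg
    have g0 : g 0 = 0 := (smul_eq_zero.1 hg).resolve_right hq0
    intro i
    fin_cases i <;> assumption
  let b := basisOfLinearIndependentOfCardEqFinrank hli (by simp)
  have hb : ∀ i, b.equivFun.symm (Pi.single i 1) = ![q, v, w] i := by
    intro i
    rw [b.equivFun_symm_apply]
    simp [b, Pi.single_apply]
  refine ⟨b.equivFun.symm, ?_, ?_⟩
  · rw [hb]
    exact hq
  · rw [hb]
    exact hv0

lemma eval_zero_res (P : MvPolynomial (Fin 3) ℂ) :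
    (res P).eval 0 = eval (Pi.single 0 1) P := by
  induction P using MvPolynomial.induction_on with
  | C a => simp [res]
  | add p q hp hq => simp [hp, hq]
  | mul_X p i hp =>
    rw [map_mul, Polynomial.eval_mul, hp, map_mul]
    congr 1
    fin_cases i <;> simp [res]

lemma lin_eq_of_res_eq_zero {a : Fin 3 → ℂ} (h : res (lin a) = 0) : lin a = C (a 2) * X 2 := by
  have h1 : Polynomial.C (a 0) + Polynomial.C (a 1) * Polynomial.X = 0 := by
    simpa [lin, res, Fin.sum_univ_three] using h
  have h2 := congrArg (fun p => Polynomial.coeff p 0) h1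
  have h3 := congrArg (fun p => Polynomial.coeff p 1) h1
  simp [Polynomial.coeff_C] at h2 h3
  simp [lin, Fin.sum_univ_three, h2, h3]

end Multinet

open MvPolynomial Multinet in
/-- If a line arrangement supports a (k,d)-multinet with d > 1 and all
line multiplicities equal to 1, then k ≤ 5. -/
theorem multinet_reduced_at_most_five_classes
    (L : Finset (Submodule ℂ (Fin 3 → ℂ)))
    (hL2 : ∀ ℓ ∈ L, Module.finrank ℂ ℓ = 2)
    (k d : ℕ) (hk : 3 ≤ k)
    (Li : Fin k → Finset (Submodule ℂ (Fin 3 → ℂ)))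
    (hsub : ∀ i, Li i ⊆ L)
    (hcover : ∀ ℓ ∈ L, ∃ i, ℓ ∈ Li i)
    (hdisj : ∀ i j, i ≠ j → Disjoint (Li i) (Li j))
    (hne : ∀ i, (Li i).Nonempty)
    (m : Submodule ℂ (Fin 3 → ℂ) → ℕ)
    (hm : ∀ ℓ ∈ L, 0 < m ℓ)
    (X : Finset (Submodule ℂ (Fin 3 → ℂ)))
    (hX : ∀ p ∈ X, Module.finrank ℂ p = 1 ∧ 3 ≤ (L.filter (fun ℓ => p ≤ ℓ)).card)
    (h1 : ∀ i, ∑ ℓ ∈ Li i, m ℓ = d)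
    (h2 : ∀ i j, i ≠ j → ∀ ℓ ∈ Li i, ∀ ℓ' ∈ Li j, ℓ ⊓ ℓ' ∈ X)
    (n : Submodule ℂ (Fin 3 → ℂ) → ℕ)
    (h3 : ∀ p ∈ X, ∀ i, ∑ ℓ ∈ (Li i).filter (fun ℓ => p ≤ ℓ), m ℓ = n p)
    (h4 : ∀ i, ∀ ℓ ∈ Li i, ∀ ℓ' ∈ Li i,
      Relation.ReflTransGen
        (fun a b => a ∈ Li i ∧ b ∈ Li i ∧ a ≠ b ∧ a ⊓ b ∉ X) ℓ ℓ')
    (hd : 1 < d)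
    (hm1 : ∀ ℓ ∈ L, m ℓ = 1) :
    k ≤ 5 := by
  have hcard : ∀ i, (Li i).card = d := by
    intro i
    rw [← h1 i, Finset.card_eq_sum_ones]
    exact Finset.sum_congr rfl fun l hl => (hm1 l (hsub i hl)).symm
  have hcardp : ∀ p ∈ X, ∀ i, ((Li i).filter fun l => p ≤ l).card = n p := by
    intro p hp i
    rw [← h3 p hp i, Finset.card_eq_sum_ones]
    exact Finset.sum_congr rfl fun l hl => (hm1 l (hsub i (Finset.mem_filter.1 hl).1)).symm
  obtain ⟨i₀, i₁, hi⟩ : ∃ i₀ i₁ : Fin k, i₀ ≠ i₁ :=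
    ⟨⟨0, by omega⟩, ⟨1, by omega⟩, by simp⟩
  -- The first step of a chain joining two distinct lines of the class.
  obtain ⟨ℓ₀, hℓ₀, ℓ₁, hℓ₁, hℓ, hq⟩ :
      ∃ ℓ₀ ∈ Li i₀, ∃ ℓ₁ ∈ Li i₀, ℓ₀ ≠ ℓ₁ ∧ ℓ₀ ⊓ ℓ₁ ∉ X := by
    obtain ⟨a, ha, b, hb, hab⟩ := Finset.one_lt_card.1 (by rw [hcard i₀]; exact hd)
    rcases (h4 i₀ a ha b hb).cases_head with h | ⟨c, ⟨hac1, hc, hac, hx⟩, -⟩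
    · exact absurd h hab
    · exact ⟨a, ha, c, hc, hac, hx⟩
  choose! φ hφ using exists_equation
  have hker : ∀ l ∈ L, LinearMap.ker (φ l) = l := fun l hl => hφ l (hL2 l hl)
  have hmem : ∀ l ∈ L, ∀ x, φ l x = 0 ↔ x ∈ l := fun l hl x => by
    rw [← LinearMap.mem_ker, hker l hl]
  obtain ⟨T, hT0, hT1⟩ :=
    exists_frame (hL2 _ (hsub _ hℓ₀)) (hL2 _ (hsub _ hℓ₁)) hℓ
  -- Coefficients of the equation of `l` in the coordinates given by `T`.
  let A : Submodule ℂ (Fin 3 → ℂ) → Fin 3 → ℂ := fun l i => φ l (T (Pi.single i 1))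
  have hev : ∀ l x, eval x (lin (A l)) = φ l (T x) := by
    intro l x
    conv_rhs => rw [pi_eq_sum_univ' x]
    simp [eval_lin, A, mul_comm]
  have hpair : ∀ s ∈ L, ∀ t ∈ L, s ≠ t → ¬ lin (A s) ∣ lin (A t) := by
    rintro s hs t ht hst ⟨K, hK⟩
    refine hst (Submodule.eq_of_le_of_finrank_eq (fun x hx => ?_) (by rw [hL2 s hs, hL2 t ht]))
    have h := congrArg (eval (T.symm x)) hK
    rw [map_mul, hev, hev, T.apply_symm_apply, (hmem s hs x).2 hx, zero_mul] at h
    exact (hmem t ht x).1 h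
  have hA : ∀ s ∈ L, A s ≠ 0 := by
    intro s hs h0
    have htop : s = ⊤ := by
      refine eq_top_iff.2 fun x _ => (hmem s hs x).1 ?_
      have := hev s (T.symm x)
      rw [T.apply_symm_apply] at this
      rw [← this, h0]
      simp [lin]
    have := hL2 s hs
    rw [htop] at this
    simp at this
  obtain ⟨e, rfl⟩ : ∃ e, d = e + 2 := ⟨d - 2, by omega⟩
  let F : Fin k → MvPolynomial (Fin 3) ℂ := fun i => ∏ l ∈ Li i, lin (A l)
  have hFhom : ∀ i, (F i).IsHomogeneous (e + 2) := by
    intro i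
    have := IsHomogeneous.prod (Li i) (fun s => lin (A s)) (fun _ => 1) fun s _ => lin_homog _
    simpa [hcard i] using this
  have hFev : ∀ i x, eval x (F i) = ∏ l ∈ Li i, φ l (T x) := by
    intro i x
    simp [F, map_prod, hev]
  have hP0 : pencilHessian (F i₀) (F i₁) ≠ 0 := by
    have hl0 : lin (A ℓ₀) = C (A ℓ₀ 2) * MvPolynomial.X 2 := by
      have e0 : A ℓ₀ 0 = 0 := (hmem _ (hsub _ hℓ₀) _).2 hT0.1
      have e1 : A ℓ₀ 1 = 0 := (hmem _ (hsub _ hℓ₀) _).2 hT1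
      simp [lin, Fin.sum_univ_three, e0, e1]
    have hc : A ℓ₀ 2 ≠ 0 := by
      intro h
      rw [h] at hl0
      exact (lin_prime (hA _ (hsub _ hℓ₀))).ne_zero (by simpa using hl0)
    let H : MvPolynomial (Fin 3) ℂ := C (A ℓ₀ 2) * ∏ l ∈ (Li i₀).erase ℓ₀, lin (A l)
    have hFH : F i₀ = MvPolynomial.X 2 * H := by
      change ∏ l ∈ Li i₀, lin (A l) = _
      rw [← Finset.mul_prod_erase _ _ hℓ₀, hl0]
      ring
    rw [hFH]
    refine pencilHessian_ne_zero (e := e) (hFhom i₁) ?_ ?_ ?_ ?_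
    · have := (isHomogeneous_C (Fin 3) (A ℓ₀ 2)).mul (IsHomogeneous.prod ((Li i₀).erase ℓ₀)
        (fun s => lin (A s)) (fun _ => 1) fun s _ => lin_homog _)
      simpa [Finset.card_erase_of_mem hℓ₀, hcard i₀] using this
    · rw [eval_zero_res, hFev, Finset.prod_ne_zero_iff]
      -- A line of the class `i₁` through the common point of `ℓ₀` and `ℓ₁` would meet `ℓ₀` there,
      -- which would put that point into `X`.
      intro l hl h0
      have hlX := h2 i₀ i₁ hi ℓ₀ hℓ₀ l hl
      have hTq : T (Pi.single 0 1) ≠ 0 := by simp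
      have hspan : ℂ ∙ T (Pi.single 0 1) = ℓ₀ ⊓ l := by
        refine Submodule.eq_of_le_of_finrank_eq ?_ ?_
        · rw [Submodule.span_singleton_le_iff_mem]
          exact ⟨hT0.1, (hmem l (hsub _ hl) _).1 h0⟩
        · rw [finrank_span_singleton hTq, (hX _ hlX).1]
      have hle : ℓ₀ ⊓ l ≤ ℓ₀ ⊓ ℓ₁ := by
        rw [← hspan, Submodule.span_singleton_le_iff_mem]
        exact hT0
      have hlt : ℓ₀ ⊓ ℓ₁ < ℓ₀ := by
        refine lt_of_le_of_ne inf_le_left fun h => hℓ ?_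
        exact Submodule.eq_of_le_of_finrank_eq (inf_eq_left.1 h)
          (by rw [hL2 _ (hsub _ hℓ₀), hL2 _ (hsub _ hℓ₁)])
      have hlt2 := Submodule.finrank_lt_finrank_of_lt hlt
      rw [hL2 _ (hsub _ hℓ₀)] at hlt2
      refine hq (Submodule.eq_of_le_of_finrank_le hle ?_ ▸ hlX)
      rw [(hX _ hlX).1]
      omega
    · rw [eval_zero_res, map_mul, map_prod]
      refine mul_eq_zero_of_right _ (Finset.prod_eq_zero
        (Finset.mem_erase.2 ⟨hℓ.symm, hℓ₁⟩) ?_)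
      rw [hev]
      exact (hmem _ (hsub _ hℓ₁) _).2 hT0.2
    · rw [map_mul, map_prod]
      refine mul_ne_zero (by simpa [res] using hc) (Finset.prod_ne_zero_iff.2 fun l hl h0 => ?_)
      rw [Finset.mem_erase] at hl
      refine hpair _ (hsub _ hℓ₀) _ (hsub _ hl.2) hl.1.symm ?_
      rw [hl0, lin_eq_of_res_eq_zero h0]
      exact mul_dvd_mul_right (map_dvd C (isUnit_iff_ne_zero.2 hc).dvd) _
  have hdvd : ∀ l ∈ L, lin (A l) ∣ pencilHessian (F i₀) (F i₁) := by
    intro l hl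
    obtain ⟨α, β, hαβ, hd'⟩ : ∃ α β : ℂ, (α ≠ 0 ∨ β ≠ 0) ∧
        lin (A l) ∣ C α * F i₀ + C β * F i₁ := by
      obtain ⟨j, hj⟩ := hcover l hl
      by_cases hj0 : j = i₀
      · subst hj0
        exact ⟨1, 0, by simp, by simpa using Finset.dvd_prod_of_mem _ hj⟩
      by_cases hj1 : j = i₁
      · subst hj1
        exact ⟨0, 1, by simp, by simpa using Finset.dvd_prod_of_mem _ hj⟩
      obtain ⟨c, hc⟩ := prod_restrict_proportional φ l (Li i₀) (Li i₁)
        (fun s hs => hker s (hsub _ hs)) (fun s hs => hker s (hsub _ hs))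
        (fibres_eq X (fun p hp => (hX p hp).1) l _ _ (h2 j i₀ hj0 l hj) (h2 j i₁ hj1 l hj)
          fun p hp => by rw [hcardp p hp, hcardp p hp])
      refine ⟨1, -c, by simp, lin_dvd (hA l hl) fun x hx => ?_⟩
      rw [hev, hmem l hl] at hx
      simp [hFev, hc _ hx]
    exact lin_dvd (hA l hl) fun x hx => pencilHessian_vanish hαβ hd' x hx
  have hle := card_lines_le L A hA hpair (pencilHessian_homog (hFhom i₀) (hFhom i₁)) hP0 hdvd
  have hLcard : L.card = k * (e + 2) := by
    have : L = Finset.univ.biUnion Li := by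
      ext l
      simp only [Finset.mem_biUnion, Finset.mem_univ, true_and]
      exact ⟨hcover l, fun ⟨i, hi⟩ => hsub i hi⟩
    rw [this, Finset.card_biUnion fun i _ j _ hij => hdisj i j hij]
    simp [hcard]
  rw [hLcard] at hle
  by_contra! hk5
  nlinarith
end
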